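/- arXiv:2505.08169 — 3 statements merged into one kernel-verified Lean document; each statement's English description precedes it below -/
import Mathlib

section
/- Let K ⊂ R^n, n ≥ 3, be a strictly convex body and let S be a topological sphere (embedded image of S^{n−1}) containing K in its interior. Suppose that for every x ∈ S there exists y ∈ S such that the support cones S(K,x) and S(K,y) differ by a central symmetry (i.e., there is a point c with S(K,y) = 2c − S(K,x)). Then K and S are centrally symmetric with a common center. -/
open Set Metric Function Bornology
open scoped RealInnerProductSpace Pointwise

noncomputable section

/-- The cone generated by `K` with apex `x`: `{x + t • (w - x) : w ∈ K, t ≥ 0}`. -/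
def cone {n : ℕ} (K : Set (EuclideanSpace ℝ (Fin n))) (x : EuclideanSpace ℝ (Fin n)) :
    Set (EuclideanSpace ℝ (Fin n)) :=
  {p | ∃ w ∈ K, ∃ t : ℝ, 0 ≤ t ∧ p = x + t • (w - x)}

/-- The support cone `S(K,x)`: the boundary of the cone generated by `K` with apex `x`. -/
def supportCone {n : ℕ} (K : Set (EuclideanSpace ℝ (Fin n))) (x : EuclideanSpace ℝ (Fin n)) :
    Set (EuclideanSpace ℝ (Fin n)) :=
  frontier (cone K x)

/-- A convex body: compact, convex, with nonempty interior. -/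
def IsConvexBody {n : ℕ} (K : Set (EuclideanSpace ℝ (Fin n))) : Prop :=
  IsCompact K ∧ Convex ℝ K ∧ (interior K).Nonempty

/-- An ellipsoid: a nondegenerate affine image of the closed unit ball. -/
def IsEllipsoid {n : ℕ} (K : Set (EuclideanSpace ℝ (Fin n))) : Prop :=
  ∃ f : EuclideanSpace ℝ (Fin n) ≃ᵃ[ℝ] EuclideanSpace ℝ (Fin n), K = f '' closedBall 0 1

/-- `K` has the strong intersection property relative to `O` and `S` with associated body `G`. -/
def StrongIntersectionProperty {n : ℕ} (O : EuclideanSpace ℝ (Fin n))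
    (K S G : Set (EuclideanSpace ℝ (Fin n))) : Prop :=
  ∀ x ∈ frontier S, ∃ y ∈ frontier S, x ≠ y ∧ Collinear ℝ {x, O, y} ∧
    ∃ u : EuclideanSpace ℝ (Fin n), u ≠ 0 ∧
      supportCone K x ∩ supportCone K y = {p | ⟪u, p - O⟫ = 0} ∩ G


section aux

variable {n : ℕ}

/-- Supporting relation: `u` attains its maximum over `K` with value `⟪u, x⟫`. -/
def Supp (K : Set (EuclideanSpace ℝ (Fin n))) (u x : EuclideanSpace ℝ (Fin n)) : Prop :=
  (∀ w ∈ K, ⟪u, w⟫ ≤ ⟪u, x⟫) ∧ ∃ w ∈ K, ⟪u, w⟫ = ⟪u, x⟫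

lemma exists_orth (hn : 3 ≤ n) (a b : EuclideanSpace ℝ (Fin n)) :
    ∃ d : EuclideanSpace ℝ (Fin n), d ≠ 0 ∧ ⟪a, d⟫ = 0 ∧ ⟪b, d⟫ = 0 := by
  have h1 : Module.finrank ℝ (Submodule.span ℝ ({a, b} : Set (EuclideanSpace ℝ (Fin n)))) ≤ 2 := by
    have := finrank_span_finset_le_card (R := ℝ) ({a, b} : Finset (EuclideanSpace ℝ (Fin n)))
    rw [Set.finrank, Finset.coe_pair] at this
    exact le_trans this (Finset.card_le_two)
  have h2 := Submodule.finrank_add_finrank_orthogonal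
    (Submodule.span ℝ ({a, b} : Set (EuclideanSpace ℝ (Fin n))))
  rw [finrank_euclideanSpace_fin] at h2
  have h3 : (Submodule.span ℝ ({a, b} : Set (EuclideanSpace ℝ (Fin n))))ᗮ ≠ ⊥ := by
    intro h
    rw [h, finrank_bot] at h2
    omega
  obtain ⟨d, hd, hd0⟩ := Submodule.exists_mem_ne_zero_of_ne_bot h3
  refine ⟨d, hd0, ?_, ?_⟩
  · exact hd a (Submodule.subset_span (by simp))
  · exact hd b (Submodule.subset_span (by simp))

lemma not_const {K : Set (EuclideanSpace ℝ (Fin n))} (hi : (interior K).Nonempty)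
    (u : EuclideanSpace ℝ (Fin n)) (r : ℝ) (h : ∀ w ∈ K, ⟪u, w⟫ = r) : u = 0 := by
  obtain ⟨w, hw⟩ := hi
  obtain ⟨ε, hε, hb⟩ := Metric.isOpen_iff.1 isOpen_interior w hw
  by_contra hu
  have hpos : 0 < ‖u‖ := norm_pos_iff.2 hu
  have h1 := h w (interior_subset hw)
  have h2 := h (w + (ε / 2 / ‖u‖) • u) (interior_subset (hb (by
    rw [mem_ball_iff_norm, add_sub_cancel_left, norm_smul, Real.norm_of_nonneg (by positivity)]
    field_simp
    linarith)))
  rw [inner_add_right, inner_smul_right, h1, real_inner_self_eq_norm_sq] at h2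
  have : 0 < ε / 2 / ‖u‖ * ‖u‖ ^ 2 := by positivity
  linarith

/-- Separation of a closed convex set from `K`, in inner product form. -/
lemma exists_sep {K L : Set (EuclideanSpace ℝ (Fin n))} (hKc : IsCompact K) (hKv : Convex ℝ K)
    (hLc : IsClosed L) (hLv : Convex ℝ L) (hd : Disjoint K L) :
    ∃ e : EuclideanSpace ℝ (Fin n), ∃ m : ℝ, (∀ w ∈ K, ⟪e, w⟫ < m) ∧ ∀ z ∈ L, m < ⟪e, z⟫ := by
  obtain ⟨f, u, v, h1, h2, h3⟩ := geometric_hahn_banach_compact_closed hKv hKc hLv hLc hd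
  refine ⟨(InnerProductSpace.toDual ℝ _).symm f, u, fun w hw => ?_, fun z hz => ?_⟩
  · rw [InnerProductSpace.toDual_symm_apply]; exact h1 w hw
  · rw [InnerProductSpace.toDual_symm_apply]; exact h2.trans (h3 z hz)

lemma exists_sep_point {K : Set (EuclideanSpace ℝ (Fin n))} (hKc : IsCompact K) (hKv : Convex ℝ K)
    {x : EuclideanSpace ℝ (Fin n)} (hx : x ∉ K) :
    ∃ e : EuclideanSpace ℝ (Fin n), ∃ m : ℝ, 0 < m ∧ ∀ w ∈ K, m ≤ ⟪e, w - x⟫ := by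
  obtain ⟨e, m, h1, h2⟩ := exists_sep hKc hKv (isClosed_singleton (x := x)) (convex_singleton x)
    (by simpa using hx)
  refine ⟨-e, ⟪e, x⟫ - m, by linarith [h2 x rfl], fun w hw => ?_⟩
  rw [inner_neg_left, inner_sub_right]
  linarith [h1 w hw]

lemma exists_sep_line {K : Set (EuclideanSpace ℝ (Fin n))} (hKc : IsCompact K) (hKv : Convex ℝ K)
    {x r : EuclideanSpace ℝ (Fin n)} (hx : ∀ s : ℝ, x + s • r ∉ K) :
    ∃ e : EuclideanSpace ℝ (Fin n), ⟪e, r⟫ = 0 ∧ ∀ w ∈ K, ⟪e, w⟫ < ⟪e, x⟫ := by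
  set L : AffineSubspace ℝ (EuclideanSpace ℝ (Fin n)) := AffineSubspace.mk' x (Submodule.span ℝ {r})
  have hL : ∀ z, z ∈ L ↔ ∃ s : ℝ, z = x + s • r := by
    intro z
    simp only [L, AffineSubspace.mem_mk', Submodule.mem_span_singleton, vsub_eq_sub]
    constructor
    · rintro ⟨s, hs⟩; exact ⟨s, by rw [hs]; abel⟩
    · rintro ⟨s, hs⟩; exact ⟨s, by rw [hs]; abel⟩
  obtain ⟨e, m, h1, h2⟩ := exists_sep hKc hKv (L.closed_of_finiteDimensional) L.convex
    (by
      rw [Set.disjoint_right]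
      intro z hz
      obtain ⟨s, rfl⟩ := (hL z).1 hz
      exact hx s)
  have h3 : ∀ s : ℝ, m < ⟪e, x⟫ + s * ⟪e, r⟫ := by
    intro s
    have := h2 (x + s • r) ((hL _).2 ⟨s, rfl⟩)
    rwa [inner_add_right, inner_smul_right] at this
  refine ⟨e, ?_, fun w hw => (h1 w hw).trans (by simpa using h3 0)⟩
  by_contra h
  have := h3 ((m - ⟪e, x⟫) / ⟪e, r⟫)
  rw [div_mul_cancel₀ _ h] at this
  linarith

/-- For every `f` some `f + ρ e` supports `K` at `x`. -/
lemma exists_rho {K : Set (EuclideanSpace ℝ (Fin n))} (hKc : IsCompact K) (hne : K.Nonempty)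
    {x e : EuclideanSpace ℝ (Fin n)} (he : ∀ w ∈ K, ⟪e, w⟫ < ⟪e, x⟫)
    (f : EuclideanSpace ℝ (Fin n)) : ∃ ρ : ℝ, Supp K (f + ρ • e) x := by
  have hc : ContinuousOn (fun w => ⟪f, w - x⟫ / (⟪e, x⟫ - ⟪e, w⟫)) K := by
    apply ContinuousOn.div (by fun_prop) (by fun_prop)
    intro w hw
    linarith [he w hw]
  obtain ⟨w0, hw0, hmax⟩ := hKc.exists_isMaxOn hne hc
  have key : ∀ w, ⟪f + (⟪f, w0 - x⟫ / (⟪e, x⟫ - ⟪e, w0⟫)) • e, w⟫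
      - ⟪f + (⟪f, w0 - x⟫ / (⟪e, x⟫ - ⟪e, w0⟫)) • e, x⟫
      = ⟪f, w - x⟫ - (⟪f, w0 - x⟫ / (⟪e, x⟫ - ⟪e, w0⟫)) * (⟪e, x⟫ - ⟪e, w⟫) := by
    intro w
    simp only [inner_add_left, inner_smul_left, inner_sub_right]
    simp
    ring
  refine ⟨⟪f, w0 - x⟫ / (⟪e, x⟫ - ⟪e, w0⟫), fun w hw => ?_, w0, hw0, ?_⟩
  · have h1 := hmax hw
    simp only [mem_ofPred_eq] at h1
    rw [div_le_iff₀ (by linarith [he w hw])] at h1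
    linarith [key w]
  · have h2 := key w0
    rw [div_mul_cancel₀ _ (by linarith [he w0 hw0])] at h2
    linarith

/-- Tangent hyperplane containing the line `x + ℝ r` and not parallel to `v`. -/
lemma exists_tangent (hn : 3 ≤ n) {K : Set (EuclideanSpace ℝ (Fin n))} (hKc : IsCompact K)
    (hi : (interior K).Nonempty)
    {x r e v : EuclideanSpace ℝ (Fin n)} (her : ⟪e, r⟫ = 0) (he : ∀ w ∈ K, ⟪e, w⟫ < ⟪e, x⟫)
    (hv : ∀ s : ℝ, v ≠ s • r) :
    ∃ u, Supp K u x ∧ ⟪u, r⟫ = 0 ∧ ⟪u, v⟫ ≠ 0 := by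
  have hne : K.Nonempty := hi.mono interior_subset
  by_cases hev : ⟪e, v⟫ = 0
  · -- use the projection of v
    have : ∃ f : EuclideanSpace ℝ (Fin n), ⟪f, r⟫ = 0 ∧ ⟪f, v⟫ ≠ 0 := by
      by_contra! hcon
      have : v ∈ (Submodule.span ℝ {r})ᗮᗮ := by
        rw [Submodule.mem_orthogonal]
        intro f hf
        apply hcon f
        rw [real_inner_comm]
        exact hf r (Submodule.mem_span_singleton_self r)
      rw [Submodule.orthogonal_orthogonal, Submodule.mem_span_singleton] at this
      obtain ⟨s, hs⟩ := this
      exact hv s hs.symm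
    obtain ⟨f, hf1, hf2⟩ := this
    obtain ⟨ρ, hρ⟩ := exists_rho hKc hne he f
    refine ⟨_, hρ, ?_, ?_⟩
    · simp [inner_add_left, inner_smul_left, hf1, her]
    · simpa [inner_add_left, inner_smul_left, hev] using hf2
  · obtain ⟨f, hf0, hf1, hf2⟩ := exists_orth hn r v
    rw [real_inner_comm] at hf1 hf2
    obtain ⟨ρ, hρ⟩ := exists_rho hKc hne he f
    obtain ⟨ρ', hρ'⟩ := exists_rho hKc hne he (-f)
    by_cases h0 : ρ = 0
    · by_cases h0' : ρ' = 0
      · exfalso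
        subst h0 h0'
        apply hf0
        apply not_const hi f ⟪f, x⟫
        intro w hw
        have h1 := hρ.1 w hw
        have h2 := hρ'.1 w hw
        simp at h1 h2
        linarith
      · refine ⟨_, hρ', ?_, ?_⟩
        · simp [inner_add_left, inner_smul_left, hf1, her]
        · simp [inner_add_left, inner_smul_left, hf2, hev, h0']
    · refine ⟨_, hρ, ?_, ?_⟩
      · simp [inner_add_left, inner_smul_left, hf1, her]
      · simp [inner_add_left, inner_smul_left, hf2, hev, h0]

lemma subset_cone (K : Set (EuclideanSpace ℝ (Fin n))) (x : EuclideanSpace ℝ (Fin n)) :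
    K ⊆ cone K x := fun w hw => ⟨w, hw, 1, zero_le_one, by simp⟩

lemma cone_convex {K : Set (EuclideanSpace ℝ (Fin n))} (hKv : Convex ℝ K)
    (x : EuclideanSpace ℝ (Fin n)) : Convex ℝ (cone K x) := by
  rintro _ ⟨w, hw, t, ht, rfl⟩ _ ⟨w', hw', t', ht', rfl⟩ a b ha hb hab
  have h1 : 0 ≤ a * t := mul_nonneg ha ht
  have h2 : 0 ≤ b * t' := mul_nonneg hb ht'
  obtain rfl : b = 1 - a := by linarith
  rcases eq_or_lt_of_le (add_nonneg h1 h2) with h | h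
  · refine ⟨w, hw, 0, le_rfl, ?_⟩
    have e1 : a * t = 0 := by linarith
    have e2 : (1 - a) * t' = 0 := by linarith
    have : a • (x + t • (w - x)) + (1 - a) • (x + t' • (w' - x))
      = x + (a * t) • (w - x) + ((1 - a) * t') • (w' - x) := by module
    rw [this, e1, e2]; simp
  · refine ⟨(a * t / (a * t + (1 - a) * t')) • w + ((1 - a) * t' / (a * t + (1 - a) * t')) • w',
      hKv hw hw' (by positivity) (by positivity) (by field_simp), _, h.le, ?_⟩
    match_scalars <;> field_simp <;> ring

lemma cone_closed {K : Set (EuclideanSpace ℝ (Fin n))} (hKc : IsCompact K) (hKv : Convex ℝ K)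
    {x : EuclideanSpace ℝ (Fin n)} (hx : x ∉ K) : IsClosed (cone K x) := by
  obtain ⟨e, m, hm, he⟩ := exists_sep_point hKc hKv hx
  rw [← closure_subset_iff_isClosed]
  intro p hp
  set U : Set (EuclideanSpace ℝ (Fin n)) := {z | ⟪e, z - x⟫ < ⟪e, p - x⟫ + 1}
  have hU : IsOpen U := isOpen_lt (by fun_prop) (by fun_prop)
  have hpU : p ∈ U := by simp [U]
  set T := (⟪e, p - x⟫ + 1) / m
  set C := (fun q : ℝ × EuclideanSpace ℝ (Fin n) => x + q.1 • (q.2 - x)) '' (Icc 0 T ×ˢ K)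
  have hC : IsCompact C := (isCompact_Icc.prod hKc).image (by fun_prop)
  have hsub : U ∩ cone K x ⊆ C := by
    rintro _ ⟨hz, w, hw, t, ht, rfl⟩
    refine ⟨(t, w), ⟨⟨ht, ?_⟩, hw⟩, rfl⟩
    simp only [U, mem_ofPred_eq, add_sub_cancel_left, inner_smul_right] at hz
    rw [le_div_iff₀ hm]
    have := mul_le_mul_of_nonneg_left (he w hw) ht
    simp only; linarith
  have h1 : p ∈ closure (U ∩ cone K x) := hU.inter_closure ⟨hpU, hp⟩
  have h2 := hC.isClosed.closure_subset_iff.2 hsub h1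
  obtain ⟨⟨t, w⟩, ⟨ht, hw⟩, rfl⟩ := h2
  exact ⟨w, hw, t, ht.1, rfl⟩

lemma inter_frontier_nonempty' {X : Type*} [TopologicalSpace X] {s t : Set X}
    (ht : IsPreconnected t) (h1 : (t ∩ s).Nonempty) (h2 : (t ∩ sᶜ).Nonempty) :
    (t ∩ frontier s).Nonempty := by
  by_contra hcon
  have hno : ∀ z ∈ t, z ∉ frontier s := fun z hz hf => hcon ⟨z, hz, hf⟩
  have hin : ∀ z ∈ t, z ∈ s → z ∈ interior s := by
    intro z hz hzs
    by_contra hh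
    exact hno z hz ⟨subset_closure hzs, hh⟩
  have hout : ∀ z ∈ t, z ∈ sᶜ → z ∈ (closure s)ᶜ := by
    intro z hz hzs hh
    exact hno z hz ⟨hh, fun h => hzs (interior_subset h)⟩
  obtain ⟨a, ha, has⟩ := h1
  obtain ⟨b, hb, hbs⟩ := h2
  obtain ⟨z, -, hz1, hz2⟩ := ht (interior s) (closure s)ᶜ isOpen_interior
    isClosed_closure.isOpen_compl
    (fun z hz => by
      by_cases h : z ∈ s
      · exact Or.inl (hin z hz h)
      · exact Or.inr (hout z hz h))
    ⟨a, ha, hin a ha has⟩ ⟨b, hb, hout b hb hbs⟩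
  exact hz2 (subset_closure (interior_subset hz1))

lemma exists_frontier {K : Set (EuclideanSpace ℝ (Fin n))} (hKc : IsCompact K)
    {x e : EuclideanSpace ℝ (Fin n)} {m : ℝ} (hm : 0 < m) (he : ∀ w ∈ K, m ≤ ⟪e, w - x⟫)
    {p v : EuclideanSpace ℝ (Fin n)} (hp : p ∈ cone K x) (hv : v ≠ 0) (hev : ⟪e, v⟫ = 0) :
    ∃ t : ℝ, 0 ≤ t ∧ p + t • v ∈ supportCone K x := by
  obtain ⟨M, hM⟩ := hKc.isBounded.exists_norm_le
  have hbd : ∀ z ∈ cone K x, ‖z - x‖ ≤ ⟪e, z - x⟫ / m * (M + ‖x‖) := by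
    rintro _ ⟨w, hw, t, ht, rfl⟩
    rw [add_sub_cancel_left, norm_smul, Real.norm_of_nonneg ht, inner_smul_right]
    have h1 : t ≤ t * ⟪e, w - x⟫ / m := by
      rw [le_div_iff₀ hm]; exact mul_le_mul_of_nonneg_left (he w hw) ht
    have h2 : ‖w - x‖ ≤ M + ‖x‖ := (norm_sub_le _ _).trans (by linarith [hM w hw])
    exact mul_le_mul h1 h2 (norm_nonneg _) (ht.trans h1)
  have hvn : 0 < ‖v‖ := norm_pos_iff.2 hv
  set B := ⟪e, p - x⟫ / m * (M + ‖x‖)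
  have hB : 0 ≤ B := (norm_nonneg _).trans (hbd p hp)
  set T := (B + ‖p - x‖ + 1) / ‖v‖
  have hT : 0 ≤ T := by positivity
  have hout : p + T • v ∉ cone K x := by
    intro hcon
    have h1 := hbd _ hcon
    have h2 : ⟪e, p + T • v - x⟫ = ⟪e, p - x⟫ := by
      rw [add_sub_right_comm, inner_add_right, inner_smul_right, hev]; simp
    rw [h2] at h1
    have h3 : ‖T • v‖ ≤ ‖p + T • v - x‖ + ‖p - x‖ := by
      have : T • v = (p + T • v - x) - (p - x) := by abel
      calc ‖T • v‖ = ‖(p + T • v - x) - (p - x)‖ := by rw [← this]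
        _ ≤ _ := norm_sub_le _ _
    rw [norm_smul, Real.norm_of_nonneg hT, div_mul_cancel₀ _ hvn.ne'] at h3
    change ‖p + T • v - x‖ ≤ B at h1
    linarith
  have hcon : IsPreconnected ((fun t : ℝ => p + t • v) '' Icc 0 T) :=
    isPreconnected_Icc.image _ (by fun_prop)
  obtain ⟨z, ⟨t, ht, rfl⟩, hz⟩ := inter_frontier_nonempty' hcon (s := cone K x)
    ⟨p, ⟨0, ⟨le_rfl, hT⟩, by simp⟩, hp⟩ ⟨_, ⟨T, ⟨hT, le_rfl⟩, rfl⟩, hout⟩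
  exact ⟨t, ht.1, hz⟩

lemma cone_subset_hull (hn : 3 ≤ n) {K : Set (EuclideanSpace ℝ (Fin n))} (hKc : IsCompact K)
    (hKv : Convex ℝ K) {x : EuclideanSpace ℝ (Fin n)} (hx : x ∉ K) :
    cone K x ⊆ convexHull ℝ (supportCone K x) := by
  obtain ⟨e, m, hm, he⟩ := exists_sep_point hKc hKv hx
  intro p hp
  obtain ⟨v, hv, hev, -⟩ := exists_orth hn e e
  obtain ⟨t, ht, h1⟩ := exists_frontier hKc hm he hp hv hev
  obtain ⟨t', ht', h2⟩ := exists_frontier hKc hm he hp (neg_ne_zero.2 hv) (by simpa using hev)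
  have hc := convex_convexHull ℝ (supportCone K x)
  have h1' := subset_convexHull ℝ _ h1
  have h2' := subset_convexHull ℝ _ h2
  rcases eq_or_lt_of_le (add_nonneg ht ht') with h | h
  · have : t = 0 := by linarith
    subst this
    simpa using h1'
  · have := hc h1' h2' (a := t' / (t + t')) (b := t / (t + t')) (by positivity) (by positivity)
      (by field_simp; ring)
    convert this using 1
    match_scalars <;> field_simp <;> ring

lemma cone_reflect (hn : 3 ≤ n) {K : Set (EuclideanSpace ℝ (Fin n))} (hKc : IsCompact K)
    (hKv : Convex ℝ K) {x y c : EuclideanSpace ℝ (Fin n)} (hx : x ∉ K) (hy : y ∉ K)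
    (h : supportCone K y = (fun z => (2 : ℝ) • c - z) '' supportCone K x) :
    ∀ p ∈ cone K y, (2 : ℝ) • c - p ∈ cone K x := by
  have hconv : Convex ℝ {p | (2 : ℝ) • c - p ∈ cone K x} := by
    intro p hp q hq a b ha hb hab
    have := cone_convex hKv x hp hq ha hb hab
    simp only [mem_ofPred_eq]
    convert this using 1
    obtain rfl : b = 1 - a := by linarith
    module
  have : convexHull ℝ (supportCone K y) ⊆ {p | (2 : ℝ) • c - p ∈ cone K x} := by
    apply convexHull_min _ hconv
    rw [h]
    rintro _ ⟨z, hz, rfl⟩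
    simp only [mem_ofPred_eq, sub_sub_cancel]
    have hcl := cone_closed hKc hKv hx
    exact hcl.frontier_subset hz
  exact fun p hp => this (cone_subset_hull hn hKc hKv hy hp)

lemma supp_reflect (hn : 3 ≤ n) {K : Set (EuclideanSpace ℝ (Fin n))} (hKc : IsCompact K)
    (hKv : Convex ℝ K) (hne : K.Nonempty)
    {x y c : EuclideanSpace ℝ (Fin n)} (hx : x ∉ K) (hy : y ∉ K)
    (h : supportCone K y = (fun z => (2 : ℝ) • c - z) '' supportCone K x) :
    ∀ u, Supp K u x → Supp K (-u) y := by
  have h' : supportCone K x = (fun z => (2 : ℝ) • c - z) '' supportCone K y := by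
    rw [h, image_image]; simp
  have r1 := cone_reflect hn hKc hKv hx hy h
  have r2 := cone_reflect hn hKc hKv hy hx h'
  obtain ⟨e, m, hm, he⟩ := exists_sep_point hKc hKv hy
  have hpos : ∀ p ∈ cone K y, 0 ≤ ⟪e, p - y⟫ ∧ (⟪e, p - y⟫ = 0 → p = y) := by
    rintro _ ⟨w, hw, t, ht, rfl⟩
    have := he w hw
    rw [add_sub_cancel_left, inner_smul_right]
    refine ⟨mul_nonneg ht (by linarith), fun h0 => ?_⟩
    rcases mul_eq_zero.1 h0 with h0 | h0
    · simp [h0]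
    · linarith
  obtain ⟨w0, hw0⟩ := hne
  have hxx : (2 : ℝ) • c - x ∈ cone K y := r2 x ⟨w0, hw0, 0, le_rfl, by simp⟩
  have hyc : y ∈ cone K y := ⟨w0, hw0, 0, le_rfl, by simp⟩
  have hy2 : y + (y - ((2 : ℝ) • c - x)) ∈ cone K y := by
    obtain ⟨w, hw, t, ht, hwt⟩ := r1 y hyc
    have h3 : x + (2 * t) • (w - x) ∈ cone K x := ⟨w, hw, 2 * t, by linarith, rfl⟩
    have h4 := r2 _ h3
    convert h4 using 1
    rw [mul_smul]
    have : t • (w - x) = (2 : ℝ) • c - y - x := by rw [hwt]; abel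
    rw [this]; module
  have hyeq : (2 : ℝ) • c - x = y := by
    apply (hpos _ hxx).2
    have h1 := (hpos _ hxx).1
    have h2 := (hpos _ hy2).1
    rw [add_sub_cancel_left, ← neg_sub ((2 : ℝ) • c - x) y, inner_neg_right] at h2
    linarith
  intro u ⟨hu1, w1, hw1, hu2⟩
  refine ⟨fun w hw => ?_, ?_⟩
  · obtain ⟨w', hw', t, ht, hh⟩ := r1 w (subset_cone K y hw)
    have : w = y - t • (w' - x) := by
      rw [← hyeq, sub_sub, ← hh]; abel
    rw [this, inner_sub_right, inner_smul_right, inner_neg_left, inner_neg_left, inner_sub_right]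
    have := mul_nonneg ht (sub_nonneg.2 (hu1 w' hw'))
    linarith
  · obtain ⟨w', hw', t, ht, hh⟩ := r2 w1 (subset_cone K x hw1)
    refine ⟨w', hw', ?_⟩
    have h5 : t • (w' - y) = x - w1 := by
      have : t • (w' - y) = (2 : ℝ) • c - w1 - y := by rw [hh]; abel
      rw [this, ← hyeq]; abel
    have ht0 : t ≠ 0 := by
      rintro rfl
      rw [zero_smul] at h5
      exact hx (by rw [sub_eq_zero.1 h5.symm]; exact hw1)
    have h6 : t * ⟪u, w' - y⟫ = 0 := by
      rw [← inner_smul_right, h5, inner_sub_right, hu2, sub_self]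
    have h7 := (mul_eq_zero.1 h6).resolve_left ht0
    rw [inner_sub_right] at h7
    rw [inner_neg_left, inner_neg_left]
    linarith

/-- Linear independence of a pair, spelled out. -/
def Ind {V : Type*} [AddCommGroup V] [Module ℝ V] (a b : V) : Prop :=
  ∀ α β : ℝ, α • a + β • b = 0 → α = 0 ∧ β = 0

lemma Ind.comb {V : Type*} [AddCommGroup V] [Module ℝ V] {x y : V} (h : Ind x y)
    {a b c d : ℝ} (hd : a * d - b * c ≠ 0) : Ind (a • x + b • y) (c • x + d • y) := by
  intro α β hab
  have h1 : (α * a + β * c) • x + (α * b + β * d) • y = 0 := by rw [← hab]; module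
  obtain ⟨h2, h3⟩ := h _ _ h1
  constructor
  · have : α * (a * d - b * c) = 0 := by linear_combination d * h2 - c * h3
    exact (mul_eq_zero.1 this).resolve_right hd
  · have : β * (a * d - b * c) = 0 := by linear_combination a * h3 - b * h2
    exact (mul_eq_zero.1 this).resolve_right hd

lemma alg_core {V : Type*} [AddCommGroup V] [Module ℝ V] {A : Set V} {c : V → V}
    (hc : ∀ a ∈ A, ∀ b ∈ A, Ind a b → ∃ s : ℝ, c a - c b = s • (a - b))
    {w x z : V} (hw : w ∈ A) (hx : x ∈ A) (hz : z ∈ A) (h1 : Ind w x) (h2 : Ind w z)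
    (h3 : Ind (w - x) (w - z)) (hcx : c x = 0) (hcz : c z = 0) : c w = 0 := by
  obtain ⟨s, hs⟩ := hc w hw x hx h1
  obtain ⟨t, ht⟩ := hc w hw z hz h2
  rw [hcx, sub_zero] at hs
  rw [hcz, sub_zero] at ht
  have : s • (w - x) + (-t) • (w - z) = 0 := by rw [← hs, neg_smul, ← ht]; simp
  rw [hs, (h3 _ _ this).1, zero_smul]

lemma alg_coord {V : Type*} [AddCommGroup V] [Module ℝ V] {A : Set V} {c : V → V}
    (hc : ∀ a ∈ A, ∀ b ∈ A, Ind a b → ∃ s : ℝ, c a - c b = s • (a - b))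
    {x y : V} (hxy : Ind x y) (w1 w2 p1 p2 q1 q2 : ℝ) (hw : w1 • x + w2 • y ∈ A)
    (hp : p1 • x + p2 • y ∈ A) (hq : q1 • x + q2 • y ∈ A)
    (h1 : w1 * p2 - w2 * p1 ≠ 0) (h2 : w1 * q2 - w2 * q1 ≠ 0)
    (h3 : (w1 - p1) * (w2 - q2) - (w2 - p2) * (w1 - q1) ≠ 0)
    (hcp : c (p1 • x + p2 • y) = 0) (hcq : c (q1 • x + q2 • y) = 0) :
    c (w1 • x + w2 • y) = 0 := by
  refine alg_core hc hw hp hq (hxy.comb h1) (hxy.comb h2) ?_ hcp hcq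
  have := hxy.comb h3
  convert this using 1 <;> module

lemma alg_zero {V : Type*} [AddCommGroup V] [Module ℝ V] {A : Set V} {c : V → V} (H : Submodule ℝ V)
    (hA0 : (0 : V) ∉ A)
    (hray : ∀ d ∈ H, d ≠ 0 → ∃ t : ℝ, 0 < t ∧ t • d ∈ A)
    (hc : ∀ a ∈ A, ∀ b ∈ A, Ind a b → ∃ s : ℝ, c a - c b = s • (a - b))
    {x y : V} (hxH : x ∈ H) (hyH : y ∈ H) (hxy : Ind x y) (hx : x ∈ A) (hy : y ∈ A)
    (hcx : c x = 0) (hcy : c y = 0) : ∀ w ∈ A, c w = 0 := by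
  have hx' : (1 : ℝ) • x + (0 : ℝ) • y ∈ A := by simpa using hx
  have hy' : (0 : ℝ) • x + (1 : ℝ) • y ∈ A := by simpa using hy
  have hcx' : c ((1 : ℝ) • x + (0 : ℝ) • y) = 0 := by simpa using hcx
  have hcy' : c ((0 : ℝ) • x + (1 : ℝ) • y) = 0 := by simpa using hcy
  have hz : ∀ i j : ℝ, i ≠ 0 → j ≠ 0 → i + j ≤ 0 →
      ∃ s : ℝ, 0 < s ∧ (s * i) • x + (s * j) • y ∈ A ∧ c ((s * i) • x + (s * j) • y) = 0 := by
    intro i j hi hj hij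
    obtain ⟨s, hs, hsA⟩ := hray (i • x + j • y) (H.add_mem (H.smul_mem _ hxH) (H.smul_mem _ hyH))
      (fun h => hi (hxy _ _ h).1)
    have e : s • (i • x + j • y) = (s * i) • x + (s * j) • y := by module
    rw [e] at hsA
    refine ⟨s, hs, hsA, ?_⟩
    have hneg : s * i + s * j ≤ 0 := by nlinarith
    have hsi : s * i ≠ 0 := mul_ne_zero hs.ne' hi
    have hsj : s * j ≠ 0 := mul_ne_zero hs.ne' hj
    refine alg_coord hc hxy _ _ 1 0 0 1 hsA hx' hy' ?_ ?_ ?_ hcx' hcy'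
    · simpa using hsj
    · simpa using hsi
    · intro h
      linarith
  obtain ⟨s1, hs1, hz1, hcz1⟩ := hz (-1) (-1) (by norm_num) (by norm_num) (by norm_num)
  obtain ⟨s2, hs2, hz2, hcz2⟩ := hz 1 (-1) (by norm_num) (by norm_num) (by norm_num)
  obtain ⟨s3, hs3, hz3, hcz3⟩ := hz (-1) 1 (by norm_num) (by norm_num) (by norm_num)
  intro w hw
  by_cases hspan : ∃ α β : ℝ, w = α • x + β • y
  · obtain ⟨α, β, rfl⟩ := hspan
    by_cases hβ : β = 0
    · have hα : α ≠ 0 := by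
        rintro rfl
        subst hβ
        simp at hw
        exact hA0 hw
      rcases lt_or_gt_of_ne hα with h | h
      · refine alg_coord hc hxy _ _ _ _ _ _ hw hy' hz2 ?_ ?_ ?_ hcy' hcz2
        · simpa [hβ] using hα
        · simp [hβ, hα, hs2.ne']
        · subst hβ; intro hh; nlinarith
      · refine alg_coord hc hxy _ _ _ _ _ _ hw hy' hz1 ?_ ?_ ?_ hcy' hcz1
        · simpa [hβ] using hα
        · simp [hβ, hα, hs1.ne']
        · subst hβ; intro hh; nlinarith
    · by_cases hα : α = 0
      · rcases lt_or_gt_of_ne hβ with h | h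
        · refine alg_coord hc hxy _ _ _ _ _ _ hw hx' hz3 ?_ ?_ ?_ hcx' hcz3
          · simpa [hα] using hβ
          · simp [hβ, hα, hs3.ne']
          · subst hα; intro hh; nlinarith
        · refine alg_coord hc hxy _ _ _ _ _ _ hw hx' hz1 ?_ ?_ ?_ hcx' hcz1
          · simpa [hα] using hβ
          · simp [hβ, hα, hs1.ne']
          · subst hα; intro hh; nlinarith
      · by_cases hs : α + β = 1
        · obtain rfl : β = 1 - α := by linarith
          refine alg_coord hc hxy _ _ _ _ _ _ hw hx' hz2 ?_ ?_ ?_ hcx' hcz2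
          · intro hh; apply hβ; linarith
          · intro hh; apply hs2.ne'; linarith
          · intro hh; apply hβ; linarith
        · refine alg_coord hc hxy _ _ _ _ _ _ hw hx' hy' ?_ ?_ ?_ hcx' hcy'
          · simpa using hβ
          · simpa using hα
          · intro hh; apply hs; linarith
  · have key : ∀ γ α β : ℝ, γ • w + α • x + β • y = 0 → γ = 0 ∧ α = 0 ∧ β = 0 := by
      intro γ α β h
      have hγ : γ = 0 := by
        by_contra hγ
        apply hspan
        refine ⟨-(α / γ), -(β / γ), ?_⟩
        have h1 : γ • w = -(α • x + β • y) := by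
          rw [eq_neg_iff_add_eq_zero, ← add_assoc]; exact h
        have h2 : w = γ⁻¹ • (γ • w) := by rw [smul_smul, inv_mul_cancel₀ hγ, one_smul]
        rw [h2, h1]
        match_scalars <;> field_simp
      subst hγ
      rw [zero_smul, zero_add] at h
      exact ⟨rfl, hxy _ _ h⟩
    refine alg_core hc hw hx hy ?_ ?_ ?_ hcx hcy
    · intro α β h
      have := key α β 0 (by rw [← h]; module)
      exact ⟨this.1, this.2.1⟩
    · intro α β h
      have := key α 0 β (by rw [← h]; module)
      exact ⟨this.1, this.2.2⟩
    · intro α β h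
      have := key (α + β) (-α) (-β) (by rw [← h]; module)
      exact ⟨neg_eq_zero.1 this.2.1, neg_eq_zero.1 this.2.2⟩

lemma alg_main {V : Type*} [AddCommGroup V] [Module ℝ V] {A : Set V} {c : V → V} (H : Submodule ℝ V)
    (hA0 : (0 : V) ∉ A)
    (hray : ∀ d ∈ H, d ≠ 0 → ∃ t : ℝ, 0 < t ∧ t • d ∈ A)
    (hc : ∀ a ∈ A, ∀ b ∈ A, Ind a b → ∃ s : ℝ, c a - c b = s • (a - b))
    {x0 y0 : V} (hxH : x0 ∈ H) (hyH : y0 ∈ H) (hxy0 : Ind x0 y0) :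
    ∃ (l : ℝ) (b : V), ∀ w ∈ A, c w = l • w + b := by
  have hx0 : x0 ≠ 0 := by
    rintro rfl
    exact one_ne_zero (hxy0 1 0 (by simp)).1
  have hy0 : y0 ≠ 0 := by
    rintro rfl
    exact one_ne_zero (hxy0 0 1 (by simp)).2
  obtain ⟨t, ht, hx⟩ := hray x0 hxH hx0
  obtain ⟨t', ht', hy⟩ := hray y0 hyH hy0
  have hxy : Ind (t • x0) (t' • y0) := by
    have := hxy0.comb (a := t) (b := 0) (c := 0) (d := t') (by
      simp [ht.ne', ht'.ne'])
    simpa using this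
  obtain ⟨l, hl⟩ := hc _ hx _ hy hxy
  refine ⟨l, c (t • x0) - l • (t • x0), fun w hw => ?_⟩
  have := alg_zero (c := fun w => c w - (l • w + (c (t • x0) - l • (t • x0)))) H hA0 hray
    (by
      intro a ha b hb hab
      obtain ⟨s, hs⟩ := hc a ha b hb hab
      refine ⟨s - l, ?_⟩
      rw [sub_smul, ← hs]; module)
    (H.smul_mem _ hxH) (H.smul_mem _ hyH) hxy hx hy (by simp)
    (by
      have : c (t' • y0) = c (t • x0) - l • (t • x0 - t' • y0) := by rw [← hl]; abel
      simp only [this]; module) w hw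
  exact sub_eq_zero.1 this

lemma max_interior {K : Set (EuclideanSpace ℝ (Fin n))} {q u : EuclideanSpace ℝ (Fin n)}
    (hq : q ∈ interior K) (h : ∀ w ∈ K, ⟪u, w⟫ ≤ ⟪u, q⟫) : u = 0 := by
  obtain ⟨ε, hε, hb⟩ := Metric.isOpen_iff.1 isOpen_interior q hq
  by_contra hu
  have hpos : 0 < ‖u‖ := norm_pos_iff.2 hu
  have h2 := h (q + (ε / 2 / ‖u‖) • u) (interior_subset (hb (by
    rw [mem_ball_iff_norm, add_sub_cancel_left, norm_smul, Real.norm_of_nonneg (by positivity)]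
    field_simp
    linarith)))
  rw [inner_add_right, inner_smul_right, real_inner_self_eq_norm_sq] at h2
  have : 0 < ε / 2 / ‖u‖ * ‖u‖ ^ 2 := by positivity
  linarith

lemma contact_unique {K : Set (EuclideanSpace ℝ (Fin n))} (hs : StrictConvex ℝ K)
    {u p w : EuclideanSpace ℝ (Fin n)} (hu : u ≠ 0) (hp : p ∈ K) (hw : w ∈ K)
    (hmax : ∀ z ∈ K, ⟪u, z⟫ ≤ ⟪u, p⟫) (h : ⟪u, w⟫ = ⟪u, p⟫) : w = p := by
  refine hs.eq hw hp (a := 1 / 2) (b := 1 / 2) (by norm_num) (by norm_num) (by norm_num) ?_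
  intro hint
  apply hu
  apply max_interior hint
  intro z hz
  rw [inner_add_right, inner_smul_right, inner_smul_right, h]
  linarith [hmax z hz]

lemma exists_contact {K : Set (EuclideanSpace ℝ (Fin n))} (hKc : IsCompact K) (hne : K.Nonempty)
    (u : EuclideanSpace ℝ (Fin n)) : ∃ p ∈ K, ∀ z ∈ K, ⟪u, z⟫ ≤ ⟪u, p⟫ := by
  obtain ⟨p, hp, hm⟩ := hKc.exists_isMaxOn hne
    (f := fun z => ⟪u, z⟫) (by fun_prop)
  exact ⟨p, hp, fun z hz => hm hz⟩

lemma supp_iff {K : Set (EuclideanSpace ℝ (Fin n))} {u p x : EuclideanSpace ℝ (Fin n)} (hp : p ∈ K)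
    (hmax : ∀ z ∈ K, ⟪u, z⟫ ≤ ⟪u, p⟫) : Supp K u x ↔ ⟪u, x⟫ = ⟪u, p⟫ := by
  constructor
  · rintro ⟨h1, w, hw, h2⟩
    exact le_antisymm (h2 ▸ hmax w hw) (h1 p hp)
  · intro h
    exact ⟨fun w hw => h ▸ hmax w hw, p, hp, h.symm⟩

lemma supp_eq {K : Set (EuclideanSpace ℝ (Fin n))} {u x y : EuclideanSpace ℝ (Fin n)}
    (hx : Supp K u x) (hy : Supp K u y) : ⟪u, x⟫ = ⟪u, y⟫ := by
  obtain ⟨h1, w, hw, h2⟩ := hx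
  obtain ⟨h3, w', hw', h4⟩ := hy
  have := h1 w' hw'
  have := h3 w hw
  linarith

/-- Midpoints of good pairs. -/
lemma good_pair (hn : 3 ≤ n) {K S : Set (EuclideanSpace ℝ (Fin n))} (hKc : IsCompact K)
    (hKv : Convex ℝ K) (hi : (interior K).Nonempty)
    {σ : EuclideanSpace ℝ (Fin n) → EuclideanSpace ℝ (Fin n)}
    (hσ : ∀ x ∈ S, σ x ∈ S ∧ ∀ u, Supp K u x → Supp K (-u) (σ x))
    {x y : EuclideanSpace ℝ (Fin n)} (hx : x ∈ S) (hy : y ∈ S)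
    (hline : ∀ s : ℝ, x + s • (x - y) ∉ K) :
    ∃ s : ℝ, (x + σ x) - (y + σ y) = s • (x - y) := by
  by_contra! hcon
  obtain ⟨e, her, he⟩ := exists_sep_line hKc hKv hline
  obtain ⟨u, hu, hur, huv⟩ := exists_tangent hn hKc hi her he hcon
  have hxy : ⟪u, x⟫ = ⟪u, y⟫ := by rw [inner_sub_right] at hur; linarith
  have huy : Supp K u y := by
    unfold Supp at hu ⊢
    rwa [hxy] at hu
  have h := supp_eq ((hσ x hx).2 u hu) ((hσ y hy).2 u huy)
  rw [inner_neg_left, inner_neg_left] at h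
  apply huv
  simp only [inner_sub_right, inner_add_right]
  linarith

lemma homothety_on_section (hn : 3 ≤ n) {K S I : Set (EuclideanSpace ℝ (Fin n))}
    (hKc : IsCompact K)
    (hKv : Convex ℝ K) (hi : (interior K).Nonempty) (hs : StrictConvex ℝ K)
    (hKI : K ⊆ I) (hIS : ∀ q ∈ I, q ∉ S)
    (hray : ∀ q ∈ I, ∀ d : EuclideanSpace ℝ (Fin n), d ≠ 0 → ∃ t : ℝ, 0 < t ∧ q + t • d ∈ S)
    {σ : EuclideanSpace ℝ (Fin n) → EuclideanSpace ℝ (Fin n)}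
    (hσ : ∀ x ∈ S, σ x ∈ S ∧ ∀ u, Supp K u x → Supp K (-u) (σ x))
    {u : EuclideanSpace ℝ (Fin n)} (hu : u ≠ 0) :
    ∃ (l : ℝ) (b : EuclideanSpace ℝ (Fin n)), ∀ x ∈ S, Supp K u x → x + σ x = l • x + b := by
  obtain ⟨p, hp, hmax⟩ := exists_contact hKc (hi.mono interior_subset) u
  obtain ⟨x0, hx0, hux0, -⟩ := exists_orth hn u u
  obtain ⟨y0, hy0, huy0, hxy0⟩ := exists_orth hn u x0
  have hind : Ind x0 y0 := by
    intro α β h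
    have h1 : ⟪x0, α • x0 + β • y0⟫ = 0 := by rw [h, inner_zero_right]
    have h2 : ⟪y0, α • x0 + β • y0⟫ = 0 := by rw [h, inner_zero_right]
    rw [inner_add_right, inner_smul_right, inner_smul_right, hxy0] at h1
    rw [inner_add_right, inner_smul_right, inner_smul_right, real_inner_comm, hxy0] at h2
    simp [hx0] at h1
    simp [hy0] at h2
    exact ⟨h1, h2⟩
  set A : Set (EuclideanSpace ℝ (Fin n)) := {a | p + a ∈ S ∧ ⟪u, a⟫ = 0}
  obtain ⟨l, b, hlb⟩ := alg_main (A := A) (c := fun a => (p + a) + σ (p + a)) ((ℝ ∙ u)ᗮ)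
    (by
      rintro ⟨h, -⟩
      rw [add_zero] at h
      exact hIS p (hKI hp) h)
    (by
      intro d hd hd0
      rw [Submodule.mem_orthogonal_singleton_iff_inner_right] at hd
      obtain ⟨t, ht, h⟩ := hray p (hKI hp) d hd0
      exact ⟨t, ht, h, by rw [inner_smul_right, hd, mul_zero]⟩)
    (by
      rintro a ⟨haS, hau⟩ b ⟨hbS, hbu⟩ hab
      obtain ⟨s, hs⟩ := good_pair hn hKc hKv hi hσ haS hbS (by
        intro s hsK
        have h1 := contact_unique hs hu hp hsK hmax (by
          simp only [inner_add_right, inner_sub_right, inner_smul_right, hau, hbu]; ring)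
        have h2 : (1 + s) • a + (-s) • b = 0 := by
          have : (1 + s) • a + (-s) • b = (p + a + s • (p + a - (p + b))) - p := by module
          rw [this, h1, sub_self]
        obtain ⟨h3, h4⟩ := hab _ _ h2
        linarith)
      exact ⟨s, by simpa using hs⟩)
    (x0 := x0) (y0 := y0)
    ((Submodule.mem_orthogonal_singleton_iff_inner_right).2 hux0)
    ((Submodule.mem_orthogonal_singleton_iff_inner_right).2 huy0) hind
  refine ⟨l, b - l • p, fun x hx hux => ?_⟩
  have h1 := (supp_iff hp hmax).1 hux
  have h2 := hlb (x - p) ⟨by simpa using hx, by rw [inner_sub_right, h1, sub_self]⟩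
  simp only [add_sub_cancel] at h2
  rw [h2]; module

lemma common_point {K I : Set (EuclideanSpace ℝ (Fin n))} (hKc : IsCompact K)
    (hne : K.Nonempty) (hs : StrictConvex ℝ K) (hKI : K ⊆ I) (hI : IsOpen I)
    {u : EuclideanSpace ℝ (Fin n)} (hu : u ≠ 0) :
    ∀ᶠ u' in nhds u, ∃ q ∈ I, Supp K u q ∧ Supp K u' q := by
  obtain ⟨δ, hδ, hth⟩ := hKc.exists_thickening_subset_open hI hKI
  obtain ⟨p, hp, hmax⟩ := exists_contact hKc hne u
  have hK' : IsCompact (K \ ball p δ) := hKc.diff isOpen_ball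
  have h1 : ∀ᶠ u' in nhds u, ∀ w ∈ K \ ball p δ, ⟪u', w - p⟫ < 0 := by
    apply hK'.eventually_forall_of_forall_eventually
    intro w hw
    have hlt : ⟪u, w - p⟫ < 0 := by
      rw [inner_sub_right]
      rcases lt_or_eq_of_le (hmax w hw.1) with h | h
      · linarith
      · exfalso
        apply hw.2
        rw [contact_unique hs hu hp hw.1 hmax h]
        exact mem_ball_self hδ
    have hcont : Continuous (fun z : EuclideanSpace ℝ (Fin n) × EuclideanSpace ℝ (Fin n) =>
      ⟪z.1, z.2 - p⟫) := by fun_prop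
    exact hcont.continuousAt.eventually_lt continuousAt_const hlt
  have h2 : ∀ᶠ u' in nhds u, 0 < ⟪u, u'⟫ := by
    have hcont : Continuous (fun z : EuclideanSpace ℝ (Fin n) => ⟪u, z⟫) := by fun_prop
    refine continuousAt_const.eventually_lt hcont.continuousAt ?_
    exact real_inner_self_pos.2 hu
  filter_upwards [h1, h2] with u' h1 h2
  obtain ⟨p', hp', hmax'⟩ := exists_contact hKc hne u'
  have hpp : ‖p' - p‖ < δ := by
    by_contra hcon
    have := h1 p' ⟨hp', by rwa [mem_ball_iff_norm]⟩
    rw [inner_sub_right] at this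
    linarith [hmax' p hp]
  set v := ⟪u, u⟫ • u' - ⟪u, u'⟫ • u with hv
  have huv : ⟪u, v⟫ = 0 := by
    rw [hv, inner_sub_right, inner_smul_right, inner_smul_right]; ring
  have hvv : ⟪v, v⟫ = ⟪u, u⟫ * ⟪u', v⟫ := by
    conv_lhs => rw [hv, inner_sub_left, ← hv]
    rw [inner_smul_left, inner_smul_left, huv]; simp
  have hup : 0 < ⟪u, u⟫ := real_inner_self_pos.2 hu
  have hest : ⟪u, u⟫ * ⟪u', p' - p⟫ ≤ ‖v‖ * ‖p' - p‖ := by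
    have e1 : ⟪v, p' - p⟫ = ⟪u, u⟫ * ⟪u', p' - p⟫ - ⟪u, u'⟫ * ⟪u, p' - p⟫ := by
      rw [hv, inner_sub_left, inner_smul_left, inner_smul_left]; simp
    have e2 : ⟪u, p' - p⟫ ≤ 0 := by rw [inner_sub_right]; linarith [hmax p' hp']
    have e3 := mul_nonneg h2.le (neg_nonneg.2 e2)
    have e4 := real_inner_le_norm v (p' - p)
    linarith
  have hge : 0 ≤ ⟪u', p' - p⟫ := by rw [inner_sub_right]; linarith [hmax' p hp]
  by_cases hv0 : v = 0
  · refine ⟨p, hKI hp, (supp_iff hp hmax).2 rfl, (supp_iff hp' hmax').2 ?_⟩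
    rw [hv0, norm_zero, zero_mul] at hest
    have : ⟪u', p' - p⟫ ≤ 0 := by
      by_contra! hh
      have := mul_pos hup hh
      linarith
    rw [inner_sub_right] at this hge
    linarith
  · have hvn : 0 < ‖v‖ := norm_pos_iff.2 hv0
    have hvpos : 0 < ⟪u', v⟫ := by
      have : 0 < ⟪u, u⟫ * ⟪u', v⟫ := by rw [← hvv]; exact real_inner_self_pos.2 hv0
      exact pos_of_mul_pos_right this hup.le
    refine ⟨p + (⟪u', p' - p⟫ / ⟪u', v⟫) • v, ?_, (supp_iff hp hmax).2 ?_,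
      (supp_iff hp' hmax').2 ?_⟩
    · apply hth
      rw [Metric.mem_thickening_iff]
      refine ⟨p, hp, ?_⟩
      rw [dist_eq_norm, add_sub_cancel_left, norm_smul, Real.norm_of_nonneg (by positivity)]
      refine lt_of_le_of_lt ?_ hpp
      rw [div_mul_eq_mul_div, div_le_iff₀ hvpos]
      rw [real_inner_self_eq_norm_sq v] at hvv
      have := mul_le_mul_of_nonneg_right hest hvn.le
      have h5 : ⟪u, u⟫ * (⟪u', p' - p⟫ * ‖v‖) ≤ ⟪u, u⟫ * (‖p' - p‖ * ⟪u', v⟫) := by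
        calc _ ≤ ‖p' - p‖ * ‖v‖ ^ 2 := by linarith
          _ = _ := by rw [hvv]; ring
      exact le_of_mul_le_mul_left h5 hup
    · rw [inner_add_right, inner_smul_right, huv]; ring
    · rw [inner_add_right, inner_smul_right, div_mul_cancel₀ _ hvpos.ne', inner_sub_right]; ring

end aux

/-- Characterization of central symmetry: if for every `x` on a topological sphere `S`
enclosing the strictly convex body `K` there is `y ∈ S` whose support cone is a central
reflection of that from `x`, then `K` and `S` are centrally symmetric and concentric. -/
theorem stmt9 {n : ℕ} (hn : 3 ≤ n) (K S : Set (EuclideanSpace ℝ (Fin n)))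
    (hK : IsConvexBody K) (hKstrict : StrictConvex ℝ K)
    (f : Metric.sphere (0 : EuclideanSpace ℝ (Fin n)) 1 → EuclideanSpace ℝ (Fin n))
    (hfc : Continuous f) (hfinj : Function.Injective f) (hfS : Set.range f = S)
    (c0 : EuclideanSpace ℝ (Fin n)) (hc0 : c0 ∈ interior K)
    (hbdd : IsBounded (connectedComponentIn Sᶜ c0))
    (hint : K ⊆ connectedComponentIn Sᶜ c0)
    (hcones : ∀ x ∈ S, ∃ y ∈ S, ∃ c : EuclideanSpace ℝ (Fin n),
      supportCone K y = (fun z => (2 : ℝ) • c - z) '' supportCone K x) :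
    ∃ c : EuclideanSpace ℝ (Fin n),
      (∀ z, z ∈ K ↔ (2 : ℝ) • c - z ∈ K) ∧ (∀ z, z ∈ S ↔ (2 : ℝ) • c - z ∈ S) := by
  obtain ⟨hKc, hKv, hi⟩ := hK
  have hne : K.Nonempty := hi.mono interior_subset
  set I := connectedComponentIn Sᶜ c0 with hIdef
  have hScl : IsClosed S := by
    rw [← hfS]
    exact (isCompact_range hfc).isClosed
  have hI : IsOpen I := hScl.isOpen_compl.connectedComponentIn
  have hIS : ∀ q ∈ I, q ∉ S := fun q hq => connectedComponentIn_subset _ _ hq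
  have hray : ∀ q ∈ I, ∀ d : EuclideanSpace ℝ (Fin n), d ≠ 0 →
      ∃ t : ℝ, 0 < t ∧ q + t • d ∈ S := by
    intro q hq d hd
    by_contra! hcon
    have hsub : (fun t : ℝ => q + t • d) '' Ici 0 ⊆ I := by
      rw [hIdef, connectedComponentIn_eq hq]
      apply IsPreconnected.subset_connectedComponentIn
      · exact isPreconnected_Ici.image _ (by fun_prop)
      · exact ⟨0, by simp, by simp⟩
      · rintro _ ⟨t, ht, rfl⟩
        rcases eq_or_lt_of_le (show (0 : ℝ) ≤ t from ht) with h | h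
        · subst h
          simpa using hIS q hq
        · exact hcon t h
    obtain ⟨M, hM⟩ := hbdd.exists_norm_le
    have hdn : 0 < ‖d‖ := norm_pos_iff.2 hd
    have hM0 : 0 ≤ M := (norm_nonneg _).trans (hM q hq)
    set T := (M + ‖q‖ + 1) / ‖d‖
    have hT : 0 ≤ T := by positivity
    have h1 := hM _ (hsub ⟨T, hT, rfl⟩)
    have h2 : ‖T • d‖ ≤ ‖q + T • d‖ + ‖q‖ := by
      calc ‖T • d‖ = ‖(q + T • d) - q‖ := by rw [add_sub_cancel_left]
        _ ≤ _ := norm_sub_le _ _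
    rw [norm_smul, Real.norm_of_nonneg hT, div_mul_cancel₀ _ hdn.ne'] at h2
    simp only at h1
    linarith
  have hSK : ∀ x ∈ S, x ∉ K := fun x hx hxK => hIS x (hint hxK) hx
  have hex : ∀ x, ∃ y, x ∈ S → y ∈ S ∧ ∀ u, Supp K u x → Supp K (-u) y := by
    intro x
    by_cases hx : x ∈ S
    · obtain ⟨y, hy, c, hc⟩ := hcones x hx
      exact ⟨y, fun _ => ⟨hy, supp_reflect hn hKc hKv hne (hSK x hx) (hSK y hy) hc⟩⟩
    · exact ⟨x, fun h => absurd h hx⟩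
  choose σ hσ using hex
  -- points of `S` have supporting directions, not orthogonal to any given vector
  have htan : ∀ x ∈ S, ∀ v : EuclideanSpace ℝ (Fin n), v ≠ 0 → ∃ u, Supp K u x ∧ ⟪u, v⟫ ≠ 0 := by
    intro x hx v hv
    obtain ⟨e, he0, he⟩ := exists_sep_line hKc hKv (x := x) (r := 0) (by simpa using hSK x hx)
    obtain ⟨u, hu, -, huv⟩ := exists_tangent hn hKc hi he0 he (v := v) (by simpa using hv)
    exact ⟨u, hu, huv⟩
  obtain ⟨d0, hd0, -, -⟩ := exists_orth hn 0 0
  have hinv : ∀ x ∈ S, σ (σ x) = x := by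
    intro x hx
    by_contra hcon
    obtain ⟨u, hu, huv⟩ := htan x hx (σ (σ x) - x) (sub_ne_zero.2 hcon)
    have h1 := (hσ _ (hσ x hx).1).2 _ ((hσ x hx).2 u hu)
    rw [neg_neg] at h1
    apply huv
    rw [inner_sub_right, supp_eq h1 hu, sub_self]
  have hfix : ∀ x ∈ S, σ x ≠ x := by
    intro x hx hcon
    obtain ⟨u, hu, huv⟩ := htan x hx d0 hd0
    have h1 := (hσ x hx).2 u hu
    rw [hcon] at h1
    have : u = 0 := by
      apply not_const hi u ⟪u, x⟫
      intro w hw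
      have h2 := h1.1 w hw
      rw [inner_neg_left, inner_neg_left] at h2
      linarith [hu.1 w hw]
    rw [this, inner_zero_left] at huv
    exact huv rfl
  have hsec : ∀ u : ({0}ᶜ : Set (EuclideanSpace ℝ (Fin n))),
      ∃ lb : ℝ × EuclideanSpace ℝ (Fin n), ∀ x ∈ S, Supp K u.1 x → x + σ x = lb.1 • x + lb.2 := by
    intro u
    obtain ⟨l, b, h⟩ := homothety_on_section hn hKc hKv hi hKstrict hint hIS hray hσ u.2
    exact ⟨(l, b), h⟩
  choose F hF using hsec
  have hloc : IsLocallyConstant F := by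
    rw [IsLocallyConstant.iff_eventually_eq]
    intro u
    have h1 := common_point hKc hne hKstrict hint hI (u := u.1) u.2
    have h2 : ∀ᶠ u' : ({0}ᶜ : Set (EuclideanSpace ℝ (Fin n))) in nhds u,
        ∃ q ∈ I, Supp K u.1 q ∧ Supp K u'.1 q :=
      continuous_subtype_val.continuousAt.eventually h1
    filter_upwards [h2] with u' hq
    obtain ⟨q, hqI, hq1, hq2⟩ := hq
    obtain ⟨d, hd, hud, hud'⟩ := exists_orth hn u.1 u'.1
    have hmove : ∀ (v : EuclideanSpace ℝ (Fin n)) (s : ℝ), ⟪v, d⟫ = 0 → Supp K v q →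
        Supp K v (q + s • d) := by
      intro v s hvd hvq
      have : ⟪v, q + s • d⟫ = ⟪v, q⟫ := by rw [inner_add_right, inner_smul_right, hvd]; simp
      unfold Supp at hvq ⊢
      rwa [this]
    obtain ⟨t, ht, htS⟩ := hray q hqI d hd
    obtain ⟨t', ht', htS'⟩ := hray q hqI (-d) (neg_ne_zero.2 hd)
    rw [smul_neg, ← neg_smul] at htS'
    have e1 := hF u _ htS (hmove _ _ hud hq1)
    have e2 := hF u' _ htS (hmove _ _ hud' hq2)
    have e3 := hF u _ htS' (hmove _ _ hud hq1)
    have e4 := hF u' _ htS' (hmove _ _ hud' hq2)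
    rw [e1] at e2
    rw [e3] at e4
    have e5 : (((F u).1 - (F u').1) * (t + t')) • d = 0 := by
      have : (((F u).1 - (F u').1) * (t + t')) • d =
        (((F u).1 • (q + t • d) + (F u).2) - ((F u).1 • (q + -t' • d) + (F u).2)) -
        (((F u').1 • (q + t • d) + (F u').2) - ((F u').1 • (q + -t' • d) + (F u').2)) := by module
      rw [this, e2, e4, sub_self]
    have e6 : (F u).1 = (F u').1 := by
      rcases smul_eq_zero.1 e5 with h | h
      · rcases mul_eq_zero.1 h with h | h
        · linarith
        · linarith
      · exact absurd h hd
    rw [e6] at e2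
    exact Prod.ext e6.symm (add_left_cancel e2).symm
  have hconn : PreconnectedSpace ({0}ᶜ : Set (EuclideanSpace ℝ (Fin n))) := by
    apply Subtype.preconnectedSpace
    refine (isConnected_compl_singleton_of_one_lt_rank ?_ 0).isPreconnected
    rw [← Module.finrank_eq_rank, finrank_euclideanSpace_fin]
    exact_mod_cast (by omega : 1 < n)
  obtain ⟨l, b, hlb⟩ : ∃ (l : ℝ) (b : EuclideanSpace ℝ (Fin n)), ∀ x ∈ S, x + σ x = l • x + b := by
    refine ⟨(F ⟨d0, hd0⟩).1, (F ⟨d0, hd0⟩).2, fun x hx => ?_⟩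
    obtain ⟨u, hu, huv⟩ := htan x hx d0 hd0
    have hu0 : u ≠ 0 := by
      rintro rfl
      simp at huv
    rw [hloc.apply_eq_of_preconnectedSpace ⟨d0, hd0⟩ ⟨u, hu0⟩]
    exact hF ⟨u, hu0⟩ x hx hu
  have hl : l = 0 := by
    obtain ⟨t, ht, hx⟩ := hray c0 (hint (interior_subset hc0)) d0 hd0
    have h1 := hlb _ hx
    have h2 := hlb _ (hσ _ hx).1
    rw [hinv _ hx, add_comm, h1] at h2
    have h3 := add_right_cancel h2
    by_contra hl
    exact hfix _ hx (smul_right_injective _ hl h3).symm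
  subst hl
  simp only [zero_smul, zero_add] at hlb
  refine ⟨(1 / 2 : ℝ) • b, ?_, ?_⟩
  all_goals
    have hb2 : (2 : ℝ) • ((1 / 2 : ℝ) • b) = b := by rw [smul_smul]; norm_num
    rw [hb2]
  · have key : ∀ z ∈ K, b - z ∈ K := by
      intro z hz
      by_contra hcon
      obtain ⟨e, m, hm, he⟩ := exists_sep_point hKc hKv hcon
      have he0 : e ≠ 0 := by
        rintro rfl
        have := he z hz
        rw [inner_zero_left] at this
        linarith
      obtain ⟨p, hp, hmax⟩ := exists_contact hKc hne e
      obtain ⟨d, hd, hed, -⟩ := exists_orth hn e e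
      obtain ⟨t, ht, hx⟩ := hray p (hint hp) d hd
      have hsx : Supp K e (p + t • d) := by
        rw [supp_iff hp hmax, inner_add_right, inner_smul_right, hed]; simp
      obtain ⟨h1, w, hw, h2⟩ := (hσ _ hx).2 _ hsx
      have h3 := he w hw
      have h4 : ⟪e, b⟫ = ⟪e, p + t • d⟫ + ⟪e, σ (p + t • d)⟫ := by
        rw [← hlb _ hx, inner_add_right]
      rw [inner_neg_left, inner_neg_left] at h2
      have h5 := hsx.1 z hz
      rw [inner_sub_right, inner_sub_right] at h3
      linarith
    intro z
    exact ⟨key z, fun h => by simpa using key _ h⟩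
  · have key : ∀ z ∈ S, b - z ∈ S := by
      intro z hz
      rw [← hlb z hz, add_sub_cancel_left]
      exact (hσ z hz).1
    intro z
    exact ⟨key z, fun h => by simpa using key _ h⟩
end
end

section
/- Let K, G ⊂ R^n (n ≥ 3) be convex bodies with K ⊂ int G and K symmetric about the origin O. If for every x ∈ bd G the cone C(K,x) generated by K with apex x is ellipsoidal (some hyperplane section of C(K,x) is an ellipsoid), then K is an ellipsoid. -/
open Set Metric Function Bornology
open scoped RealInnerProductSpace Pointwise

noncomputable section

/-- A cone `C` with apex `x` is ellipsoidal if some hyperplane not through `x` cuts it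
in an (n-1)-dimensional ellipsoid (a nondegenerate affine image of a closed unit ball
of dimension n-1). -/
def IsEllipsoidalConeAt {n : ℕ} (C : Set (EuclideanSpace ℝ (Fin n)))
    (x : EuclideanSpace ℝ (Fin n)) : Prop :=
  ∃ (u : EuclideanSpace ℝ (Fin n)) (c : ℝ), u ≠ 0 ∧ ⟪u, x⟫ ≠ c ∧
    ∃ f : EuclideanSpace ℝ (Fin (n - 1)) →ᵃ[ℝ] EuclideanSpace ℝ (Fin n),
      Function.Injective f ∧ C ∩ {p | ⟪u, p⟫ = c} = f '' closedBall 0 1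


/-! ### Algebra of quadratic forms -/

theorem quad_factor {V : Type*} [AddCommGroup V] [Module ℝ V] (D : QuadraticForm ℝ V)
    (a : V →ₗ[ℝ] ℝ) (ha : ∃ v, a v ≠ 0) (hD : ∀ y, a y = 0 → D y = 0) :
    ∃ m : V →ₗ[ℝ] ℝ, ∀ y, D y = a y * m y := by
  obtain ⟨v, hv⟩ := ha
  obtain ⟨v0, hv0⟩ : ∃ v0, a v0 = 1 := ⟨(a v)⁻¹ • v, by simp [hv]⟩
  refine ⟨QuadraticMap.polarBilin D v0 - D v0 • a, fun y => ?_⟩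
  have h1 : D (y - a y • v0) = 0 := hD _ (by simp [hv0])
  have h2 : D y = D ((a y • v0) + (y - a y • v0)) := by congr 1; abel
  rw [h2, QuadraticMap.map_add D, h1]
  simp only [QuadraticMap.map_smul, QuadraticMap.polar_smul_left, QuadraticMap.polar_sub_right,
    QuadraticMap.polar_self, LinearMap.sub_apply,
    LinearMap.smul_apply, QuadraticMap.polarBilin_apply_apply, smul_eq_mul]
  simp
  ring

theorem quad_factor2 {V : Type*} [AddCommGroup V] [Module ℝ V] (D : QuadraticForm ℝ V)
    (a b : V →ₗ[ℝ] ℝ) (hab : ∃ v, b v = 0 ∧ a v ≠ 0) (hb : ∃ v, b v ≠ 0)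
    (hDa : ∀ y, a y = 0 → D y = 0) (hDb : ∀ y, b y = 0 → D y = 0) :
    ∃ k : ℝ, ∀ y, D y = k * (a y * b y) := by
  obtain ⟨v0, hv0, hav0⟩ := hab
  obtain ⟨m, hm⟩ := quad_factor D a ⟨v0, hav0⟩ hDa
  have key : ∀ v, b v = 0 → a v ≠ 0 → m v = 0 := by
    intro v h1 h2
    have := hDb v h1
    rw [hm v] at this
    rcases mul_eq_zero.1 this with h | h
    · exact absurd h h2
    · exact h
  have key2 : ∀ v, b v = 0 → m v = 0 := by
    intro v h1
    by_cases h2 : a v = 0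
    · have h3 := key (v + v0) (by simp [h1, hv0]) (by simp [h2, hav0])
      have h4 := key v0 hv0 hav0
      rw [map_add, h4] at h3
      linarith
    · exact key v h1 h2
  obtain ⟨w, hw⟩ := hb
  refine ⟨m w / b w, fun y => ?_⟩
  have h5 := key2 (y - (b y / b w) • w) (by simp [hw])
  simp only [map_sub, map_smul, smul_eq_mul] at h5
  have h6 : m y = b y / b w * m w := by linarith
  rw [hm y, h6]
  ring

theorem quad_factor3 {V : Type*} [AddCommGroup V] [Module ℝ V] (D : QuadraticForm ℝ V)
    (a b c : V →ₗ[ℝ] ℝ) (hab : ∃ v, b v = 0 ∧ a v ≠ 0) (hca : ∃ v, c v = 0 ∧ a v ≠ 0)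
    (hcb : ∃ v, c v = 0 ∧ b v ≠ 0)
    (hDa : ∀ y, a y = 0 → D y = 0) (hDb : ∀ y, b y = 0 → D y = 0)
    (hDc : ∀ y, c y = 0 → D y = 0) :
    ∀ y, D y = 0 := by
  obtain ⟨v1, hv1, hv1'⟩ := hca
  obtain ⟨v2, hv2, hv2'⟩ := hcb
  obtain ⟨k, hk⟩ := quad_factor2 D a b hab ⟨v2, hv2'⟩ hDa hDb
  have h1 : k = 0 := by
    have e1 := hDc v1 hv1
    have e2 := hDc v2 hv2
    have e3 := hDc (v1 + v2) (by simp [hv1, hv2])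
    rw [hk] at e1 e2 e3
    by_contra hk0
    simp only [mul_eq_zero, hk0, hv1', hv2', false_or, or_false] at e1 e2 e3
    simp [e1, e2, hv1', hv2'] at e3
  intro y
  rw [hk, h1, zero_mul]

/-! ### Collinearity -/

theorem exists_of_not_collinear {n : ℕ} {a b c : EuclideanSpace ℝ (Fin n)}
    (h : ¬ Collinear ℝ {a, b, c}) : ∃ v, ⟪a - c, v⟫ = 0 ∧ ⟪a - b, v⟫ ≠ 0 := by
  by_contra! H
  apply h
  set p := a - b with hp
  set q := a - c with hq
  have h1 := H (p - (⟪q, p⟫ / ⟪q, q⟫) • q) (by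
    rw [inner_sub_right, inner_smul_right]
    by_cases h0 : q = 0
    · simp [h0]
    · have : ⟪q, q⟫ ≠ 0 := by simpa using h0
      field_simp
      ring)
  have h2 : ⟪q, p - (⟪q, p⟫ / ⟪q, q⟫) • q⟫ = 0 := by
    rw [inner_sub_right, inner_smul_right]
    by_cases h0 : q = 0
    · simp [h0]
    · have : ⟪q, q⟫ ≠ 0 := by simpa using h0
      field_simp
      ring
  have h3 : p - (⟪q, p⟫ / ⟪q, q⟫) • q = 0 := by
    rw [← inner_self_eq_zero (𝕜 := ℝ)]
    nth_rewrite 1 [inner_sub_left]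
    rw [h1, inner_smul_left, h2]
    simp
  rw [collinear_iff_of_mem (p₀ := a) (by simp)]
  refine ⟨q, fun z hz => ?_⟩
  simp only [mem_insert_iff, mem_singleton_iff] at hz
  rcases hz with rfl | rfl | rfl
  · exact ⟨0, by simp⟩
  · refine ⟨-(⟪q, p⟫ / ⟪q, q⟫), ?_⟩
    rw [neg_smul, ← sub_eq_zero.1 h3, hp]
    simp
  · refine ⟨-1, ?_⟩
    rw [hq]; simp

theorem not_collinear_of_det {n : ℕ} {a b c : EuclideanSpace ℝ (Fin n)}
    (u v : EuclideanSpace ℝ (Fin n))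
    (h : ⟪u, b - a⟫ * ⟪v, c - a⟫ - ⟪v, b - a⟫ * ⟪u, c - a⟫ ≠ 0) : ¬ Collinear ℝ {a, b, c} := by
  intro H
  apply h
  rw [collinear_iff_of_mem (p₀ := a) (by simp)] at H
  obtain ⟨d, hd⟩ := H
  obtain ⟨r, hr⟩ := hd b (by simp)
  obtain ⟨s, hs⟩ := hd c (by simp)
  subst hr hs
  simp [inner_smul_right]
  ring

/-- Twice the oriented area of a triangle. -/
def triArea {ι : Type} (U V : ι → ℝ) (i j k : ι) : ℝ :=
  (U j - U i) * (V k - V i) - (V j - V i) * (U k - U i)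

theorem triArea_cyc {ι : Type} (U V : ι → ℝ) (i j k : ι) :
    triArea U V j k i = triArea U V i j k := by
  simp only [triArea]; ring

theorem triArea_swap {ι : Type} (U V : ι → ℝ) (i j k : ι) :
    triArea U V i k j = - triArea U V i j k := by
  simp only [triArea]; ring

theorem triArea_sorted {ι : Type} (U V : ι → ℝ) (e : Fin 5 → ι)
    (h : ∀ a b c : Fin 5, a < b → b < c → triArea U V (e a) (e b) (e c) ≠ 0) :
    ∀ a b c : Fin 5, a ≠ b → a ≠ c → b ≠ c → triArea U V (e a) (e b) (e c) ≠ 0 := by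
  intro a b c hab hac hbc
  rcases lt_or_gt_of_ne hab with h1 | h1 <;> rcases lt_or_gt_of_ne hac with h2 | h2 <;>
    rcases lt_or_gt_of_ne hbc with h3 | h3
  · exact h a b c h1 h3
  · rw [triArea_swap]; exact neg_ne_zero.2 (h a c b h2 h3)
  · omega
  · rw [← triArea_cyc, ← triArea_cyc, triArea_cyc, triArea_cyc, triArea_cyc]; exact h c a b h2 h1
  · rw [← triArea_cyc, triArea_swap]; exact neg_ne_zero.2 (h b a c h1 h2)
  · omega
  · rw [← triArea_cyc]; exact h b c a h3 h2
  · rw [triArea_swap, triArea_cyc, ← triArea_cyc, ← triArea_cyc]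
    exact neg_ne_zero.2 (h c b a h3 h1)

theorem five_rays (t1 t2 t3 t4 t5 : ℝ) (h1 : 0 < t1) (h2 : 0 < t2) (h3 : 0 < t3) (h4 : 0 < t4)
    (h5 : 0 < t5) (U V : Fin 6 → ℝ)
    (hU : U = ![0, t1, t2, -3 * t3, -3 * t4, t5])
    (hV : V = ![0, 0, 3 * t2, 2 * t3, -2 * t4, -3 * t5]) :
    ∃ e : Fin 5 → Fin 6, e 0 = 0 ∧
      ∀ a b c : Fin 5, a ≠ b → a ≠ c → b ≠ c → triArea U V (e a) (e b) (e c) ≠ 0 := by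
  have q12 := mul_pos h1 h2
  have q13 := mul_pos h1 h3
  have q14 := mul_pos h1 h4
  have q15 := mul_pos h1 h5
  have q23 := mul_pos h2 h3
  have q24 := mul_pos h2 h4
  have q25 := mul_pos h2 h5
  have q34 := mul_pos h3 h4
  have q35 := mul_pos h3 h5
  have q45 := mul_pos h4 h5
  have pair : ∀ i j : Fin 6, 0 < i → i < j → triArea U V 0 i j ≠ 0 := by
    intro i j hi hij
    subst hU hV
    fin_cases i <;> fin_cases j <;>
      first
      | exact absurd hij (by decide)
      | exact absurd hi (by decide)
      | (intro h; simp [triArea, -mul_eq_zero] at h; nlinarith)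
  have big : triArea U V 1 2 4 ≠ 0 ∧ triArea U V 2 3 5 ≠ 0 ∧ triArea U V 1 3 4 ≠ 0 ∧
      triArea U V 2 4 5 ≠ 0 ∧ triArea U V 1 3 5 ≠ 0 := by
    subst hU hV
    refine ⟨?_, ?_, ?_, ?_, ?_⟩ <;>
      (intro h; simp [triArea, -mul_eq_zero] at h; nlinarith)
  have adj : ∀ i j k l : Fin 6, U j * V k - V j * U k ≠ 0 → triArea U V i j l ≠ 0 →
      triArea U V i j k = 0 → triArea U V j k l ≠ 0 := by
    intro i j k l e1 e2 e3 e4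
    apply e2
    simp only [triArea] at *
    have f1 : (U k - U j) * ((U j - U i) * (V l - V i) - (V j - V i) * (U l - U i)) = 0 := by
      linear_combination (U l - U j) * e3 + (U j - U i) * e4
    have f2 : (V k - V j) * ((U j - U i) * (V l - V i) - (V j - V i) * (U l - U i)) = 0 := by
      linear_combination (V l - V j) * e3 + (V j - V i) * e4
    rcases mul_eq_zero.1 f1 with g1 | g1
    · rcases mul_eq_zero.1 f2 with g2 | g2
      · exfalso
        apply e1
        rw [sub_eq_zero.1 g1, sub_eq_zero.1 g2]
        ring
      · exact g2
    · exact g1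
  have U0 : U 0 = 0 := by rw [hU]; rfl
  have V0 : V 0 = 0 := by rw [hV]; rfl
  have pair' : ∀ i j : Fin 6, 0 < i → i < j → U i * V j - V i * U j ≠ 0 := by
    intro i j hi hij
    have := pair i j hi hij
    simpa [triArea, U0, V0] using this
  obtain ⟨b1, b2, b3, b4, b5⟩ := big
  have A1 : triArea U V 1 2 3 = 0 → triArea U V 2 3 4 ≠ 0 :=
    adj 1 2 3 4 (pair' _ _ (by decide) (by decide)) b1
  have A2 : triArea U V 2 3 4 = 0 → triArea U V 3 4 5 ≠ 0 :=
    adj 2 3 4 5 (pair' _ _ (by decide) (by decide)) b2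
  have A3 : triArea U V 3 4 5 = 0 → triArea U V 1 4 5 ≠ 0 := by
    intro h
    rw [← triArea_cyc]
    exact adj 3 4 5 1 (pair' _ _ (by decide) (by decide)) (by rw [triArea_cyc]; exact b3) h
  have A4 : triArea U V 1 4 5 = 0 → triArea U V 1 2 5 ≠ 0 := by
    intro h h'
    exact adj 4 5 1 2 (by
      have := pair' 1 5 (by decide) (by decide)
      intro h; apply this; linarith) (by rw [triArea_cyc]; exact b4) (by rw [triArea_cyc]; exact h)
      (by rw [← triArea_cyc, triArea_cyc, ← triArea_cyc, triArea_cyc]; rw [triArea_cyc] at *; simp only [triArea] at *; linarith)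
  have A5 : triArea U V 1 2 5 = 0 → triArea U V 1 2 3 ≠ 0 := by
    intro h
    exact adj 5 1 2 3 (pair' _ _ (by decide) (by decide))
      (by intro h'; apply b5; simp only [triArea] at *; linarith)
      (by simp only [triArea] at *; linarith)
  have fin : ∀ i j k l : Fin 6, 0 < i → i < j → j < k → k < l →
      triArea U V i j k ≠ 0 → triArea U V i j l ≠ 0 → triArea U V i k l ≠ 0 →
      triArea U V j k l ≠ 0 → ∃ e : Fin 5 → Fin 6, e 0 = 0 ∧
      ∀ a b c : Fin 5, a ≠ b → a ≠ c → b ≠ c → triArea U V (e a) (e b) (e c) ≠ 0 := by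
    intro i j k l e0 e1 e2 e3 f1 f2 f3 f4
    refine ⟨![0, i, j, k, l], rfl, triArea_sorted U V _ ?_⟩
    have g1 := pair i j e0 e1
    have g2 := pair i k e0 (e1.trans e2)
    have g3 := pair i l e0 (e1.trans (e2.trans e3))
    have g4 := pair j k (e0.trans e1) e2
    have g5 := pair j l (e0.trans e1) (e2.trans e3)
    have g6 := pair k l (e0.trans (e1.trans e2)) e3
    intro a b c hab hbc
    fin_cases a <;> fin_cases b <;>
      first
      | exact absurd hab (by decide)
      | (fin_cases c <;>
          first
          | exact absurd hbc (by decide)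
          | assumption)
  by_cases c2 : triArea U V 1 2 3 = 0
  · have d3 := A1 c2
    have d1 : triArea U V 1 2 5 ≠ 0 := fun h => A5 h c2
    by_cases c4 : triArea U V 3 4 5 = 0
    · exact fin 1 2 4 5 (by decide) (by decide) (by decide) (by decide) b1 d1 (A3 c4) b4
    · exact fin 2 3 4 5 (by decide) (by decide) (by decide) (by decide) d3 b2 b4 c4
  · by_cases c3 : triArea U V 2 3 4 = 0
    · have d4 := A2 c3
      by_cases c5 : triArea U V 1 4 5 = 0
      · exact fin 1 2 3 5 (by decide) (by decide) (by decide) (by decide) c2 (A4 c5) b5 b2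
      · exact fin 1 3 4 5 (by decide) (by decide) (by decide) (by decide) b3 b5 c5 d4
    · exact fin 1 2 3 4 (by decide) (by decide) (by decide) (by decide) c2 b1 b3 c3

/-! ### The interpolating quadric -/

theorem collinear_pairs_subsingleton {n : ℕ} (e : Fin 5 → EuclideanSpace ℝ (Fin n))
    (he : ∀ a b c : Fin 5, a ≠ b → a ≠ c → b ≠ c → ¬ Collinear ℝ {e a, e b, e c})
    (a b c : Fin 5) (hab : a ≠ b) (hca : c ≠ a) (hcb : c ≠ b) (d : Fin 5) (hcd : c ≠ d) :
    {x | Collinear ℝ {x, e a, e b} ∧ Collinear ℝ {x, e c, e d}}.Subsingleton := by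
  intro x hx x' hx'
  by_contra hne
  have hinj : ∀ i j : Fin 5, i ≠ j → e i ≠ e j := by
    intro i j hij h
    have hex : ∀ i j : Fin 5, ∃ k : Fin 5, i ≠ k ∧ j ≠ k := by decide
    obtain ⟨k, h1, h2⟩ := hex i j
    apply he i j k hij h1 h2
    rw [h]
    simpa using collinear_pair ℝ (e j) (e k)
  have key : ∀ i j : Fin 5, i ≠ j → Collinear ℝ {x, e i, e j} → Collinear ℝ {x', e i, e j} →
      e i ∈ line[ℝ, x, x'] ∧ e j ∈ line[ℝ, x, x'] := by
    intro i j hij h h'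
    have m1 : x ∈ line[ℝ, e i, e j] :=
      h.mem_affineSpan_of_mem_of_ne (by simp) (by simp) (by simp) (hinj i j hij)
    have m2 : x' ∈ line[ℝ, e i, e j] :=
      h'.mem_affineSpan_of_mem_of_ne (by simp) (by simp) (by simp) (hinj i j hij)
    have hc : Collinear ℝ {x, x', e i, e j} :=
      collinear_insert_insert_of_mem_affineSpan_pair m1 m2
    exact ⟨hc.mem_affineSpan_of_mem_of_ne (by simp) (by simp) (by simp) hne,
      hc.mem_affineSpan_of_mem_of_ne (by simp) (by simp) (by simp) hne⟩
  obtain ⟨ka, kb⟩ := key a b hab hx.1 hx'.1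
  obtain ⟨kc, -⟩ := key c d hcd hx.2 hx'.2
  exact he a b c hab hca.symm hcb.symm
    (collinear_triple_of_mem_affineSpan_pair ka kb kc)

theorem bad_finite {n : ℕ} (e : Fin 5 → EuclideanSpace ℝ (Fin n))
    (he : ∀ a b c : Fin 5, a ≠ b → a ≠ c → b ≠ c → ¬ Collinear ℝ {e a, e b, e c}) :
    {x | ∃ a b c d : Fin 5, a ≠ b ∧ c ≠ a ∧ c ≠ b ∧ c ≠ d ∧ Collinear ℝ {x, e a, e b} ∧
      Collinear ℝ {x, e c, e d}}.Finite := by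
  have : {x | ∃ a b c d : Fin 5, a ≠ b ∧ c ≠ a ∧ c ≠ b ∧ c ≠ d ∧ Collinear ℝ {x, e a, e b} ∧
      Collinear ℝ {x, e c, e d}} ⊆ ⋃ a : Fin 5, ⋃ b : Fin 5, ⋃ c : Fin 5, ⋃ d : Fin 5,
        {x | (a ≠ b ∧ c ≠ a ∧ c ≠ b ∧ c ≠ d) ∧ Collinear ℝ {x, e a, e b} ∧
      Collinear ℝ {x, e c, e d}} := by
    rintro x ⟨a, b, c, d, h1, h2, h3, h4, h5, h6⟩
    simp only [mem_iUnion]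
    exact ⟨a, b, c, d, ⟨h1, h2, h3, h4⟩, h5, h6⟩
  refine Set.Finite.subset ?_ this
  refine finite_iUnion fun a => finite_iUnion fun b => finite_iUnion fun c => finite_iUnion fun d =>
    Set.Subsingleton.finite ?_
  rintro x ⟨⟨h1, h2, h3, h4⟩, hx⟩ x' ⟨-, hx'⟩
  exact collinear_pairs_subsingleton e he a b c h1 h2 h3 d h4 hx hx'

theorem good_triple {n : ℕ} (e : Fin 5 → EuclideanSpace ℝ (Fin n)) (x : EuclideanSpace ℝ (Fin n))
    (hx : ¬ ∃ a b c d : Fin 5, a ≠ b ∧ c ≠ a ∧ c ≠ b ∧ c ≠ d ∧ Collinear ℝ {x, e a, e b} ∧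
      Collinear ℝ {x, e c, e d}) :
    ∃ i j k : Fin 5, i ≠ 0 ∧ j ≠ 0 ∧ k ≠ 0 ∧ i ≠ j ∧ i ≠ k ∧ j ≠ k ∧
      ¬ Collinear ℝ {x, e i, e j} ∧ ¬ Collinear ℝ {x, e i, e k} ∧ ¬ Collinear ℝ {x, e j, e k} ∧
      ¬ Collinear ℝ {x, e 0, e i} ∧ ¬ Collinear ℝ {x, e 0, e j} ∧ ¬ Collinear ℝ {x, e 0, e k} := by
  push Not at hx
  by_cases H : ∃ a b : Fin 5, a ≠ b ∧ b ≠ 0 ∧ Collinear ℝ {x, e a, e b}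
  · obtain ⟨a, b, hab, hb, hc⟩ := H
    have hex : ∀ b : Fin 5, ∃ i j k : Fin 5, i ≠ 0 ∧ j ≠ 0 ∧
        k ≠ 0 ∧ i ≠ j ∧ i ≠ k ∧ j ≠ k ∧ i ≠ b ∧ j ≠ b ∧ k ≠ b := by decide
    obtain ⟨i, j, k, hi, hj, hk, hij, hik, hjk, hib, hjb, hkb⟩ := hex b
    -- lines avoiding `b` cannot contain `x`
    have key : ∀ c d : Fin 5, c ≠ d → c ≠ b → d ≠ b → ¬ Collinear ℝ {x, e c, e d} := by
      intro c d hcd hcb hdb h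
      by_cases hca : c = a
      · by_cases hda : d = a
        · exact hcd (hca.trans hda.symm)
        · exact hx a b d c hab hda hdb hcd.symm hc (by rwa [pair_comm])
      · exact hx a b c d hab hca hcb hcd hc h
    exact ⟨i, j, k, hi, hj, hk, hij, hik, hjk, key _ _ hij hib hjb, key _ _ hik hib hkb,
      key _ _ hjk hjb hkb, key _ _ hi.symm hb.symm hib, key _ _ hj.symm hb.symm hjb,
      key _ _ hk.symm hb.symm hkb⟩
  · push Not at H
    exact ⟨1, 2, 3, by decide, by decide, by decide, by decide, by decide, by decide,
      H _ _ (by decide) (by decide), H _ _ (by decide) (by decide), H _ _ (by decide) (by decide),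
      H _ _ (by decide) (by decide), H _ _ (by decide) (by decide), H _ _ (by decide) (by decide)⟩

theorem exists_quadric {n : ℕ} (p g : EuclideanSpace ℝ (Fin n)) (c0 : ℝ)
    (X : Set (EuclideanSpace ℝ (Fin n)))
    (Q : EuclideanSpace ℝ (Fin n) → QuadraticForm ℝ (EuclideanSpace ℝ (Fin n)))
    (hp : ∀ x ∈ X, ⟪x, p⟫ = c0)
    (hpol : ∀ x ∈ X, ∀ v, QuadraticMap.polar (Q x) p v = 2 * ⟪g - x, v⟫)
    (hag : ∀ x ∈ X, ∀ x' ∈ X, ¬ Collinear ℝ {g, x, x'} → ∀ y, ⟪x - x', y⟫ = 0 → Q x y = Q x' y)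
    (e : Fin 5 → EuclideanSpace ℝ (Fin n)) (he0 : e 0 = g) (heX : ∀ i, i ≠ 0 → e i ∈ X)
    (he : ∀ a b c : Fin 5, a ≠ b → a ≠ c → b ≠ c → ¬ Collinear ℝ {e a, e b, e c}) :
    ∃ (B : QuadraticForm ℝ (EuclideanSpace ℝ (Fin n))) (l : EuclideanSpace ℝ (Fin n) →ₗ[ℝ] ℝ)
      (k : ℝ), l p + 2 * k * c0 = -2 ∧
      {x | x ∈ X ∧ ¬ ∀ y, Q x y = B y + ⟪x, y⟫ * l y + k * ⟪x, y⟫ ^ 2}.Finite := by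
  set L : EuclideanSpace ℝ (Fin n) → (EuclideanSpace ℝ (Fin n) →ₗ[ℝ] ℝ) :=
    fun a => innerₛₗ ℝ a with hL
  have hLa : ∀ a y, L a y = ⟪a, y⟫ := fun a y => rfl
  have X1 := heX 1 (by decide)
  have X2 := heX 2 (by decide)
  have X3 := heX 3 (by decide)
  have ag : ∀ i j : Fin 5, i ≠ 0 → j ≠ 0 → i ≠ j → ∀ y, ⟪e i - e j, y⟫ = 0 →
      Q (e i) y = Q (e j) y := by
    intro i j hi hj hij
    refine hag _ (heX i hi) _ (heX j hj) ?_
    rw [← he0]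
    exact he _ _ _ hi.symm hj.symm hij
  have nc : ∀ {a b c : EuclideanSpace ℝ (Fin n)}, ¬ Collinear ℝ {a, b, c} →
      ∃ v, L (a - c) v = 0 ∧ L (a - b) v ≠ 0 := fun h => exists_of_not_collinear h
  have nc3 := nc (he 3 1 2 (by decide) (by decide) (by decide))
  have nc2 := nc (he 2 1 3 (by decide) (by decide) (by decide))
  -- Newton interpolation
  obtain ⟨m, hm⟩ := quad_factor (Q (e 2) - Q (e 1)) (L (e 2 - e 1))
    (let ⟨v, hv⟩ := nc2; ⟨v, hv.2⟩) (by
      intro y hy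
      rw [_root_.sub_apply, ag 2 1 (by decide) (by decide) (by decide) y hy, sub_self])
  have hm' : ∀ y, Q (e 2) y = Q (e 1) y + (⟪e 2, y⟫ - ⟪e 1, y⟫) * m y := by
    intro y
    have := hm y
    rw [_root_.sub_apply, hLa, inner_sub_left] at this
    linarith
  obtain ⟨k, hk⟩ := quad_factor2 (Q (e 3) - Q (e 1) - QuadraticMap.linMulLin (L (e 3 - e 1)) m)
    (L (e 3 - e 1)) (L (e 3 - e 2)) nc3
    (let ⟨v, hv⟩ := nc (he 3 2 1 (by decide) (by decide) (by decide)); ⟨v, hv.2⟩)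
    (by
      intro y hy
      simp only [_root_.sub_apply, QuadraticMap.linMulLin_apply, hy]
      rw [ag 3 1 (by decide) (by decide) (by decide) y hy]
      ring)
    (by
      intro y hy
      simp only [_root_.sub_apply, QuadraticMap.linMulLin_apply]
      rw [ag 3 2 (by decide) (by decide) (by decide) y hy, hm' y, hLa, inner_sub_left]
      rw [hLa, inner_sub_left] at hy
      have : ⟪e 3, y⟫ = ⟪e 2, y⟫ := by linarith
      rw [this]
      ring)
  set B := Q (e 1) - QuadraticMap.linMulLin (L (e 1)) m +
    k • QuadraticMap.linMulLin (L (e 1)) (L (e 2)) with hB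
  set l := m - k • (L (e 1) + L (e 2)) with hl
  set F : EuclideanSpace ℝ (Fin n) → QuadraticForm ℝ (EuclideanSpace ℝ (Fin n)) := fun x =>
    B + QuadraticMap.linMulLin (L x) l + k • QuadraticMap.linMulLin (L x) (L x) with hF
  have hFa : ∀ x y, F x y = B y + ⟪x, y⟫ * l y + k * ⟪x, y⟫ ^ 2 := by
    intro x y
    simp only [hF, _root_.add_apply, _root_.smul_apply, QuadraticMap.linMulLin_apply,
      hLa, smul_eq_mul]
    ring
  have hFN : ∀ x y, F x y = Q (e 1) y + (⟪x, y⟫ - ⟪e 1, y⟫) * m y +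
      k * ((⟪x, y⟫ - ⟪e 1, y⟫) * (⟪x, y⟫ - ⟪e 2, y⟫)) := by
    intro x y
    rw [hFa]
    simp only [hB, hl, _root_.add_apply, _root_.sub_apply, _root_.smul_apply,
      QuadraticMap.linMulLin_apply, hLa, smul_eq_mul, LinearMap.sub_apply, LinearMap.smul_apply,
      LinearMap.add_apply]
    ring
  have F1 : ∀ y, Q (e 1) y = F (e 1) y := by intro y; rw [hFN]; ring
  have F2 : ∀ y, Q (e 2) y = F (e 2) y := by intro y; rw [hFN, hm' y]; ring
  have F3 : ∀ y, Q (e 3) y = F (e 3) y := by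
    intro y
    rw [hFN]
    have := hk y
    simp only [_root_.sub_apply, QuadraticMap.linMulLin_apply, hLa, inner_sub_left] at this
    linarith
  have FF : ∀ x x' y, ⟪x - x', y⟫ = 0 → F x y = F x' y := by
    intro x x' y h
    rw [inner_sub_left] at h
    rw [hFa, hFa, sub_eq_zero.1 h]
  have step : ∀ x ∈ X, ∀ i j k : Fin 5, i ≠ 0 → j ≠ 0 → k ≠ 0 →
      ¬ Collinear ℝ {x, e i, e j} → ¬ Collinear ℝ {x, e i, e k} → ¬ Collinear ℝ {x, e j, e k} →
      ¬ Collinear ℝ {x, e 0, e i} → ¬ Collinear ℝ {x, e 0, e j} → ¬ Collinear ℝ {x, e 0, e k} →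
      (∀ y, Q (e i) y = F (e i) y) → (∀ y, Q (e j) y = F (e j) y) →
      (∀ y, Q (e k) y = F (e k) y) → ∀ y, Q x y = F x y := by
    intro x hx i j k hi hj hk hij hik hjk h0i h0j h0k Fi Fj Fk y
    have van : ∀ i, i ≠ 0 → ¬ Collinear ℝ {x, e 0, e i} → (∀ y, Q (e i) y = F (e i) y) →
        ∀ y, L (x - e i) y = 0 → (Q x - F x) y = 0 := by
      intro i hi h0i Fi y hy
      rw [_root_.sub_apply, FF x (e i) y hy, ← Fi y,
        hag x hx (e i) (heX i hi) (by rw [← he0, insert_comm]; exact h0i) y hy, sub_self]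
    have := quad_factor3 (Q x - F x) (L (x - e i)) (L (x - e j)) (L (x - e k)) (nc hij) (nc hik)
      (nc hjk) (van i hi h0i Fi) (van j hj h0j Fj) (van k hk h0k Fk) y
    rw [_root_.sub_apply] at this
    linarith
  have F4 : ∀ y, Q (e 4) y = F (e 4) y := by
    apply step (e 4) (heX 4 (by decide)) 1 2 3 <;>
      first
      | decide
      | assumption
      | exact he _ _ _ (by decide) (by decide) (by decide)
  have Fi : ∀ i : Fin 5, i ≠ 0 → ∀ y, Q (e i) y = F (e i) y := by
    intro i hi
    fin_cases i
    · exact absurd rfl hi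
    · exact F1
    · exact F2
    · exact F3
    · exact F4
  refine ⟨B, l, k, ?_, (bad_finite e he).subset ?_⟩
  · -- derivative at `p`
    obtain ⟨v, -, hv⟩ := nc2
    rw [hLa] at hv
    have e1 := hpol _ X1 v
    have e2 := hpol _ X2 v
    simp only [QuadraticMap.polar, hm', map_add, inner_add_right, hp _ X1, hp _ X2,
      inner_sub_left] at e1 e2 hv
    have h3 : (⟪e 2, v⟫ - ⟪e 1, v⟫) * (m p + 2) = 0 := by linear_combination e2 - e1
    have h4 : m p + 2 = 0 := by
      rcases mul_eq_zero.1 h3 with h | h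
      · exact absurd h hv
      · exact h
    simp only [hl, LinearMap.sub_apply, LinearMap.smul_apply, LinearMap.add_apply, hLa, hp _ X1,
      hp _ X2, smul_eq_mul]
    linarith
  · rintro x ⟨hx, hbad⟩
    by_contra hgood
    apply hbad
    obtain ⟨i, j, k, hi, hj, hk, hij, hik, hjk, h1, h2, h3, h4, h5, h6⟩ := good_triple e x hgood
    intro y
    rw [← hFa]
    exact step x hx i j k hi hj hk h1 h2 h3 h4 h5 h6 (Fi i hi) (Fi j hj) (Fi k hk) y

/-! ### Support function and the quadratic form of an ellipsoidal cone -/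

/-- The support function of `K`. -/
def suppF {n : ℕ} (K : Set (EuclideanSpace ℝ (Fin n))) (y : EuclideanSpace ℝ (Fin n)) : ℝ :=
  sSup ((fun k => ⟪k, y⟫) '' K)

theorem suppF_isGreatest {n : ℕ} {K : Set (EuclideanSpace ℝ (Fin n))} (hK : IsCompact K)
    (hne : K.Nonempty) (y : EuclideanSpace ℝ (Fin n)) :
    IsGreatest ((fun k => ⟪k, y⟫) '' K) (suppF K y) := by
  have hc : IsCompact ((fun k => ⟪k, y⟫) '' K) := hK.image (by fun_prop)
  exact hc.isGreatest_sSup (hne.image _)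

theorem suppF_le {n : ℕ} {K : Set (EuclideanSpace ℝ (Fin n))} (hK : IsCompact K)
    {k : EuclideanSpace ℝ (Fin n)} (hk : k ∈ K) (y : EuclideanSpace ℝ (Fin n)) :
    ⟪k, y⟫ ≤ suppF K y :=
  (suppF_isGreatest hK ⟨k, hk⟩ y).2 ⟨k, hk, rfl⟩

theorem suppF_att {n : ℕ} {K : Set (EuclideanSpace ℝ (Fin n))} (hK : IsCompact K)
    (hne : K.Nonempty) (y : EuclideanSpace ℝ (Fin n)) : ∃ k ∈ K, ⟪k, y⟫ = suppF K y :=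
  (suppF_isGreatest hK hne y).1

theorem suppF_eq {n : ℕ} {K : Set (EuclideanSpace ℝ (Fin n))} (hK : IsCompact K)
    {y : EuclideanSpace ℝ (Fin n)} {c : ℝ} (h1 : ∀ k ∈ K, ⟪k, y⟫ ≤ c)
    (h2 : ∃ k ∈ K, ⟪k, y⟫ = c) : suppF K y = c := by
  obtain ⟨k, hk, rfl⟩ := h2
  obtain ⟨k', hk', h'⟩ := suppF_att hK ⟨k, hk⟩ y
  exact le_antisymm (h' ▸ h1 k' hk') (suppF_le hK hk y)

theorem cone_ray {n : ℕ} {K : Set (EuclideanSpace ℝ (Fin n))} (hK : IsConvexBody K)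
    {x : EuclideanSpace ℝ (Fin n)} (hx : x ∉ K)
    {u : EuclideanSpace ℝ (Fin n)} {c : ℝ} (hu : ⟪u, x⟫ ≠ c)
    (f : EuclideanSpace ℝ (Fin (n - 1)) →ᵃ[ℝ] EuclideanSpace ℝ (Fin n))
    (hf : cone K x ∩ {p | ⟪u, p⟫ = c} = f '' closedBall 0 1) :
    (∀ b ∈ closedBall (0 : EuclideanSpace ℝ (Fin (n - 1))) 1, ∃ k ∈ K, ∃ s : ℝ, 0 < s ∧
      f b - x = s • (k - x)) ∧
    (∀ k ∈ K, ∃ b ∈ closedBall (0 : EuclideanSpace ℝ (Fin (n - 1))) 1, ∃ s : ℝ, 0 < s ∧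
      k - x = s • (f b - x)) := by
  have hd : c - ⟪u, x⟫ ≠ 0 := sub_ne_zero.2 hu.symm
  have hfb : ∀ b ∈ closedBall (0 : EuclideanSpace ℝ (Fin (n - 1))) 1, ∃ k ∈ K, ∃ s : ℝ, 0 < s ∧
      f b - x = s • (k - x) := by
    intro b hb
    have : f b ∈ cone K x ∩ {p | ⟪u, p⟫ = c} := by rw [hf]; exact ⟨b, hb, rfl⟩
    obtain ⟨⟨k, hk, t, ht, h⟩, h2⟩ := this
    refine ⟨k, hk, t, lt_of_le_of_ne ht ?_, by rw [h]; abel⟩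
    rintro rfl
    apply hu
    rw [h] at h2
    simpa using h2
  refine ⟨hfb, ?_⟩
  set φ : EuclideanSpace ℝ (Fin n) → ℝ := fun k => ⟪u, k - x⟫ / (c - ⟪u, x⟫) with hφ
  have hray : ∀ k ∈ K, 0 < φ k → ∃ b ∈ closedBall (0 : EuclideanSpace ℝ (Fin (n - 1))) 1,
      k - x = φ k • (f b - x) := by
    intro k hk hpos
    have : x + (φ k)⁻¹ • (k - x) ∈ f '' closedBall 0 1 := by
      rw [← hf]
      refine ⟨⟨k, hk, (φ k)⁻¹, by positivity, rfl⟩, ?_⟩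
      have h0 : ⟪u, k - x⟫ ≠ 0 := by
        intro h
        simp [hφ, h] at hpos
      simp only [Set.mem_ofPred_eq, inner_add_right, inner_smul_right, hφ]
      field_simp
      ring
    obtain ⟨b, hb, h⟩ := this
    refine ⟨b, hb, ?_⟩
    rw [h, add_sub_cancel_left, smul_smul, mul_inv_cancel₀ hpos.ne', one_smul]
  obtain ⟨k0, hk0, s0, hs0, h0⟩ := hfb 0 (by simp)
  have hk0pos : 0 < φ k0 := by
    have : f 0 ∈ cone K x ∩ {p | ⟪u, p⟫ = c} := by rw [hf]; exact ⟨0, by simp, rfl⟩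
    have h2 : ⟪u, f 0⟫ = c := this.2
    have h3 : ⟪u, f 0 - x⟫ = c - ⟪u, x⟫ := by rw [inner_sub_right, h2]
    rw [h0, inner_smul_right] at h3
    have h4 : ⟪u, k0 - x⟫ = (c - ⟪u, x⟫) / s0 := by field_simp; linarith
    simp only [hφ]
    rw [h4]
    have h5 : (c - ⟪u, x⟫) / s0 / (c - ⟪u, x⟫) = 1 / s0 := by field_simp
    rw [h5]
    positivity
  obtain ⟨R, hR⟩ : ∃ R, ∀ b ∈ closedBall (0 : EuclideanSpace ℝ (Fin (n - 1))) 1,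
      ‖f b - x‖ ≤ R := by
    have hc : IsCompact (closedBall (0 : EuclideanSpace ℝ (Fin (n - 1))) 1) :=
      isCompact_closedBall _ _
    have hcont : Continuous f := AffineMap.continuous_of_finiteDimensional f
    exact hc.exists_bound_of_continuousOn (f := fun b => f b - x) (by fun_prop)
  have hpos : ∀ k ∈ K, 0 < φ k := by
    intro k hk
    by_contra! hneg
    set θ := φ k0 / (φ k0 - φ k) with hθ
    have hden : 0 < φ k0 - φ k := by linarith
    have hθ0 : 0 ≤ θ := by positivity
    have hθ1 : θ ≤ 1 := by rw [hθ, div_le_one hden]; linarith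
    set k1 := (1 - θ) • k0 + θ • k with hk1
    have hk1K : k1 ∈ K := hK.2.1 hk0 hk (by linarith) hθ0 (by ring)
    have hlin : ∀ (a b : EuclideanSpace ℝ (Fin n)) (t : ℝ),
        φ ((1 - t) • a + t • b) = (1 - t) * φ a + t * φ b := by
      intro a b t
      simp only [hφ, inner_sub_right, inner_add_right, inner_smul_right]
      ring
    have hφ1 : φ k1 = 0 := by
      rw [hk1, hlin, hθ]
      field_simp
      ring
    have hb : ∀ t : ℝ, 0 < t → t ≤ 1 → ‖k1 - x‖ ≤ t * (R * φ k0 + ‖k0 - k1‖) := by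
      intro t ht ht1
      have hm : (1 - t) • k1 + t • k0 ∈ K := hK.2.1 hk1K hk0 (by linarith) ht.le (by ring)
      have hv : φ ((1 - t) • k1 + t • k0) = t * φ k0 := by rw [hlin, hφ1]; ring
      obtain ⟨b, hb, hb2⟩ := hray _ hm (by rw [hv]; positivity)
      have hn : ‖(1 - t) • k1 + t • k0 - x‖ ≤ t * φ k0 * R := by
        rw [hb2, hv, norm_smul, Real.norm_of_nonneg (by positivity)]
        exact mul_le_mul_of_nonneg_left (hR b hb) (by positivity)
      have he : k1 - x = ((1 - t) • k1 + t • k0 - x) - t • (k0 - k1) := by module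
      rw [he]
      refine (norm_sub_le _ _).trans ?_
      rw [norm_smul t, Real.norm_of_nonneg ht.le]
      nlinarith
    have hx1 : 0 < ‖k1 - x‖ := by
      rw [norm_pos_iff, sub_ne_zero]
      rintro h
      exact hx (h ▸ hk1K)
    set M := R * φ k0 + ‖k0 - k1‖ with hM
    have hM0 : 0 < M := by
      have := hb 1 one_pos le_rfl
      linarith
    have h5 := hb (min 1 (‖k1 - x‖ / (2 * M))) (by positivity) (min_le_left _ _)
    have h6 : min 1 (‖k1 - x‖ / (2 * M)) * M ≤ ‖k1 - x‖ / (2 * M) * M :=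
      mul_le_mul_of_nonneg_right (min_le_right _ _) hM0.le
    have h7 : ‖k1 - x‖ / (2 * M) * M = ‖k1 - x‖ / 2 := by field_simp
    linarith
  intro k hk
  obtain ⟨b, hb, h⟩ := hray k hk (hpos k hk)
  exact ⟨b, hb, φ k, hpos k hk, h⟩

theorem cone_data {n : ℕ} {K : Set (EuclideanSpace ℝ (Fin n))} (hK : IsConvexBody K)
    (hflat : ∀ y : EuclideanSpace ℝ (Fin n), y ≠ 0 → ∀ c, ¬ ∀ k ∈ K, ⟪k, y⟫ = c)
    {x : EuclideanSpace ℝ (Fin n)} (hx : x ∉ K) (hc : IsEllipsoidalConeAt (cone K x) x) :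
    ∃ Q : QuadraticForm ℝ (EuclideanSpace ℝ (Fin n)),
      (∀ z, suppF K z = ⟪x, z⟫ → Q z = 0) ∧
      (∀ z, Q z = 0 → suppF K z = ⟪x, z⟫ ∨ suppF K (-z) = ⟪x, -z⟫) ∧
      (∀ p, p ≠ 0 → ∀ g ∈ K, suppF K p = ⟪x, p⟫ → ⟪g, p⟫ = ⟪x, p⟫ →
        ∃ c : ℝ, 0 < c ∧ ∀ v, QuadraticMap.polar Q p v = c * ⟪g - x, v⟫) := by
  obtain ⟨u, c, -, hu, f, -, hf⟩ := hc
  obtain ⟨hfb, hkb⟩ := cone_ray hK hx hu f hf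
  have hKc := hK.1
  have hKne : K.Nonempty := hK.2.2.mono interior_subset
  set e := f 0 - x with he
  set A := f.linear with hA
  set T := LinearMap.adjoint A with hT
  have hfe : ∀ b y, ⟪f b - x, y⟫ = ⟪e, y⟫ + ⟪b, T y⟫ := by
    intro b y
    have h1 : f b = A b + f 0 := by
      have := f.map_vadd 0 b
      simpa using this
    rw [h1, hT, LinearMap.adjoint_inner_right, he, ← inner_add_left]
    congr 1
    abel
  set Q : QuadraticForm ℝ (EuclideanSpace ℝ (Fin n)) :=
    LinearMap.BilinMap.toQuadraticMap ((innerₗ (EuclideanSpace ℝ (Fin (n - 1)))).compl₁₂ T T) -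
      QuadraticMap.linMulLin (innerₛₗ ℝ e) (innerₛₗ ℝ e) with hQ
  have hQa : ∀ y, Q y = ‖T y‖ ^ 2 - ⟪e, y⟫ ^ 2 := by
    intro y
    simp [hQ, pow_two]
  have hQp : ∀ y v, QuadraticMap.polar Q y v = 2 * (⟪T y, T v⟫ - ⟪e, y⟫ * ⟪e, v⟫) := by
    intro y v
    simp only [QuadraticMap.polar, hQa, map_add, inner_add_right, norm_add_sq_real]
    ring
  have hnorm : ∀ z, suppF K z = ⟪x, z⟫ → ‖T z‖ = -⟪e, z⟫ := by
    intro z hz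
    apply le_antisymm
    · have hb : ‖T z‖⁻¹ • T z ∈ closedBall (0 : EuclideanSpace ℝ (Fin (n - 1))) 1 := by
        rw [mem_closedBall_zero_iff, norm_smul, norm_inv, norm_norm]
        exact inv_mul_le_one
      obtain ⟨k, hk, s, hs, h⟩ := hfb _ hb
      have h1 := suppF_le hKc hk z
      have h2 := hfe (‖T z‖⁻¹ • T z) z
      rw [h, inner_smul_left, inner_smul_left, real_inner_self_eq_norm_sq, inner_sub_left] at h2
      have h3 : (starRingEnd ℝ) ‖T z‖⁻¹ * ‖T z‖ ^ 2 = ‖T z‖ := by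
        by_cases h0 : ‖T z‖ = 0
        · simp [h0]
        · simp; field_simp
      rw [h3] at h2
      have h4 : s * (⟪k, z⟫ - ⟪x, z⟫) ≤ 0 :=
        mul_nonpos_of_nonneg_of_nonpos hs.le (by linarith)
      simp at h2
      linarith
    · obtain ⟨k, hk, h⟩ := suppF_att hKc hKne z
      obtain ⟨b, hb, s, hs, hk2⟩ := hkb k hk
      have h1 : ⟪k - x, z⟫ = 0 := by rw [inner_sub_left, h, hz, sub_self]
      rw [hk2, inner_smul_left, hfe] at h1
      have h2 : ⟪e, z⟫ + ⟪b, T z⟫ = 0 := by simpa [hs.ne'] using h1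
      have h3 := real_inner_le_norm b (T z)
      rw [mem_closedBall_zero_iff] at hb
      have h4 : ‖b‖ * ‖T z‖ ≤ 1 * ‖T z‖ := mul_le_mul_of_nonneg_right hb (norm_nonneg _)
      linarith
  have hback : ∀ z, ‖T z‖ = -⟪e, z⟫ → suppF K z = ⟪x, z⟫ := by
    intro z hz
    apply suppF_eq hKc
    · intro k hk
      obtain ⟨b, hb, s, hs, hk2⟩ := hkb k hk
      have h1 : ⟪k - x, z⟫ = s * (⟪e, z⟫ + ⟪b, T z⟫) := by
        rw [hk2, inner_smul_left, hfe]; simp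
      have h3 := real_inner_le_norm b (T z)
      rw [mem_closedBall_zero_iff] at hb
      have h4 : ‖b‖ * ‖T z‖ ≤ 1 * ‖T z‖ := mul_le_mul_of_nonneg_right hb (norm_nonneg _)
      have h5 : s * (⟪e, z⟫ + ⟪b, T z⟫) ≤ 0 :=
        mul_nonpos_of_nonneg_of_nonpos hs.le (by linarith)
      rw [inner_sub_left] at h1
      linarith
    · have hb : ‖T z‖⁻¹ • T z ∈ closedBall (0 : EuclideanSpace ℝ (Fin (n - 1))) 1 := by
        rw [mem_closedBall_zero_iff, norm_smul, norm_inv, norm_norm]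
        exact inv_mul_le_one
      obtain ⟨k, hk, s, hs, h⟩ := hfb _ hb
      refine ⟨k, hk, ?_⟩
      have h2 := hfe (‖T z‖⁻¹ • T z) z
      rw [h, inner_smul_left, inner_smul_left, real_inner_self_eq_norm_sq, inner_sub_left] at h2
      have h3 : (starRingEnd ℝ) ‖T z‖⁻¹ * ‖T z‖ ^ 2 = ‖T z‖ := by
        by_cases h0 : ‖T z‖ = 0
        · simp [h0]
        · simp; field_simp
      rw [h3, hz] at h2
      simp [hs.ne'] at h2
      linarith
  refine ⟨Q, ?_, ?_, ?_⟩
  · intro z hz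
    rw [hQa, hnorm z hz]; ring
  · intro z hz
    rw [hQa] at hz
    have h1 : (‖T z‖ - ⟪e, z⟫) * (‖T z‖ + ⟪e, z⟫) = 0 := by linarith
    rcases mul_eq_zero.1 h1 with h | h
    · right
      apply hback
      rw [map_neg, norm_neg, inner_neg_right]; linarith
    · left
      apply hback
      linarith
  · intro p hp g hg hsp hgp
    have hTp := hnorm p hsp
    have hTpos : 0 < ‖T p‖ := by
      rw [norm_pos_iff]
      intro h0
      rw [h0, norm_zero] at hTp
      apply hflat p hp ⟪x, p⟫
      intro k hk
      obtain ⟨b, hb, s, hs, hk2⟩ := hkb k hk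
      have h1 : ⟪k - x, p⟫ = 0 := by
        rw [hk2, inner_smul_left, hfe, h0]
        simp; right; linarith
      rw [inner_sub_left] at h1
      linarith
    obtain ⟨b, hb, s, hs, hk2⟩ := hkb g hg
    have h1 : ⟪g - x, p⟫ = 0 := by rw [inner_sub_left, hgp, sub_self]
    rw [hk2, inner_smul_left, hfe] at h1
    have h2 : ⟪e, p⟫ + ⟪b, T p⟫ = 0 := by simpa [hs.ne'] using h1
    rw [mem_closedBall_zero_iff] at hb
    have hbT : ‖T p‖ • b - T p = 0 := by
      rw [← norm_eq_zero, ← sq_eq_zero_iff]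
      apply le_antisymm _ (sq_nonneg _)
      rw [norm_sub_sq_real, norm_smul, inner_smul_left, norm_norm]
      have h3 : ⟪b, T p⟫ = ‖T p‖ := by linarith
      rw [h3]
      have h4 : ‖b‖ ^ 2 ≤ 1 := by
        have := norm_nonneg b
        nlinarith
      simp only [conj_trivial]
      nlinarith [sq_nonneg ‖T p‖, mul_le_mul_of_nonneg_left h4 (sq_nonneg ‖T p‖)]
    refine ⟨2 * ‖T p‖ / s, by positivity, fun v => ?_⟩
    have hTv : ⟪T p, T v⟫ = ‖T p‖ * ⟪b, T v⟫ := by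
      have := congrArg (fun w => ⟪w, T v⟫) (sub_eq_zero.1 hbT)
      simpa [inner_smul_left] using this.symm
    rw [hQp, hTv, hk2, inner_smul_left, hfe b v, show ⟪e, p⟫ = -‖T p‖ by linarith]
    simp only [conj_trivial]
    field_simp
    ring

/-! ### Basic facts about the bodies -/

theorem suppF_continuous {n : ℕ} {K : Set (EuclideanSpace ℝ (Fin n))} (hK : IsCompact K) :
    Continuous (suppF K) := by
  have h := hK.continuous_sSup (f := fun (y k : EuclideanSpace ℝ (Fin n)) => ⟪k, y⟫)
    (by fun_prop)
  exact h

theorem exists_ball_subset {n : ℕ} {K : Set (EuclideanSpace ℝ (Fin n))} (hK : IsConvexBody K)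
    (hs : K = -K) : ∃ r : ℝ, 0 < r ∧ closedBall 0 r ⊆ K := by
  obtain ⟨a, ha⟩ := hK.2.2
  have hna : -a ∈ interior K := by
    rw [mem_interior_iff_mem_nhds] at *
    have hc := (continuous_neg (G := EuclideanSpace ℝ (Fin n))).continuousAt (x := -a)
    have h2 := hc.preimage_mem_nhds (t := K) (by simpa using ha)
    have h3 : (fun y : EuclideanSpace ℝ (Fin n) => -y) ⁻¹' K = K := by
      conv_rhs => rw [hs]
      rfl
    rwa [h3] at h2
  have h0 : (0 : EuclideanSpace ℝ (Fin n)) ∈ interior K := by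
    have := hK.2.1.interior ha hna (by norm_num : (0 : ℝ) ≤ 1 / 2) (by norm_num : (0 : ℝ) ≤ 1 / 2)
      (by norm_num)
    simpa using this
  rw [mem_interior_iff_mem_nhds] at h0
  obtain ⟨r, hr, h⟩ := Metric.nhds_basis_closedBall.mem_iff.1 h0
  exact ⟨r, hr, h⟩

theorem suppF_pos {n : ℕ} {K : Set (EuclideanSpace ℝ (Fin n))} (hK : IsCompact K)
    {r : ℝ} (hr : 0 < r) (hb : closedBall 0 r ⊆ K) {y : EuclideanSpace ℝ (Fin n)} (hy : y ≠ 0) :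
    0 < suppF K y := by
  have hy' := norm_pos_iff.2 hy
  have hk : (r / ‖y‖) • y ∈ K := by
    apply hb
    rw [mem_closedBall_zero_iff, norm_smul, Real.norm_of_nonneg (by positivity)]
    apply le_of_eq
    field_simp
  have h := suppF_le hK hk y
  rw [real_inner_smul_left, real_inner_self_eq_norm_sq] at h
  have : 0 < r / ‖y‖ * ‖y‖ ^ 2 := by positivity
  linarith

theorem body_not_flat {n : ℕ} {K : Set (EuclideanSpace ℝ (Fin n))} (hK : IsCompact K)
    {r : ℝ} (hr : 0 < r) (hb : closedBall 0 r ⊆ K) (y : EuclideanSpace ℝ (Fin n)) (hy : y ≠ 0)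
    (c : ℝ) : ¬ ∀ k ∈ K, ⟪k, y⟫ = c := by
  intro h
  have h0 := h 0 (hb (by simp [hr.le]))
  obtain ⟨k, hk, hk2⟩ := suppF_att hK ⟨0, hb (by simp [hr.le])⟩ y
  have := suppF_pos hK hr hb hy
  rw [h k hk, ← h0, inner_zero_left] at hk2
  linarith

theorem suppF_even {n : ℕ} {K : Set (EuclideanSpace ℝ (Fin n))} (hs : K = -K)
    (y : EuclideanSpace ℝ (Fin n)) : suppF K (-y) = suppF K y := by
  unfold suppF
  congr 1
  ext c
  constructor
  · rintro ⟨k, hk, rfl⟩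
    refine ⟨-k, ?_, by simp⟩
    rw [hs] at hk
    simpa using hk
  · rintro ⟨k, hk, rfl⟩
    refine ⟨-k, ?_, by simp⟩
    rw [hs] at hk
    simpa using hk

theorem ray_frontier {n : ℕ} {G : Set (EuclideanSpace ℝ (Fin n))} (hG : IsCompact G)
    {q v : EuclideanSpace ℝ (Fin n)} (hq : q ∈ G) (hv : v ≠ 0) :
    ∃ t : ℝ, 0 ≤ t ∧ q + t • v ∈ frontier G := by
  have hv' := norm_pos_iff.2 hv
  obtain ⟨R, hR⟩ := hG.isBounded.exists_norm_le
  set S : Set ℝ := {t | 0 ≤ t ∧ q + t • v ∈ G} with hS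
  have hcl : IsClosed S := by
    apply IsClosed.inter isClosed_Ici
    exact hG.isClosed.preimage (by fun_prop : Continuous fun t : ℝ => q + t • v)
  have hbd : S ⊆ Icc 0 ((R + ‖q‖) / ‖v‖) := by
    rintro t ⟨ht, htG⟩
    refine ⟨ht, ?_⟩
    rw [le_div_iff₀ hv']
    have h1 := hR _ htG
    have h2 : ‖t • v‖ ≤ ‖q + t • v‖ + ‖q‖ := by
      have := norm_sub_le (q + t • v) q
      simpa using this
    rw [norm_smul, Real.norm_of_nonneg ht] at h2
    linarith
  have hcp : IsCompact S := isCompact_Icc.of_isClosed_subset hcl hbd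
  obtain ⟨t, ht, hmax⟩ := hcp.exists_isGreatest ⟨0, le_rfl, by simpa using hq⟩
  refine ⟨t, ht.1, ?_⟩
  rw [hG.isClosed.frontier_eq]
  refine ⟨ht.2, fun hinner => ?_⟩
  have hc : ContinuousAt (fun s : ℝ => q + s • v) t := by fun_prop
  have h1 := hc.preimage_mem_nhds (mem_interior_iff_mem_nhds.1 hinner)
  obtain ⟨ε, hε, h2⟩ := Metric.nhds_basis_closedBall.mem_iff.1 h1
  have h3 : t + ε ∈ S := by
    refine ⟨by linarith [ht.1], ?_⟩
    exact h2 (by simp [abs_of_pos hε])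
  have := hmax h3
  linarith

theorem ray_frontier_pos {n : ℕ} {G : Set (EuclideanSpace ℝ (Fin n))} (hG : IsCompact G)
    {q v : EuclideanSpace ℝ (Fin n)} (hq : q ∈ interior G) (hv : v ≠ 0) :
    ∃ t : ℝ, 0 < t ∧ q + t • v ∈ frontier G := by
  obtain ⟨t, ht, h⟩ := ray_frontier hG (interior_subset hq) hv
  refine ⟨t, lt_of_le_of_ne ht ?_, h⟩
  rintro rfl
  rw [hG.isClosed.frontier_eq] at h
  exact h.2 (by simpa using hq)

/-- The normalised quadratic forms attached to the apexes in the plane `⟪x, p⟫ = h p`. -/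
theorem local_forms {n : ℕ} {K G : Set (EuclideanSpace ℝ (Fin n))} (hK : IsConvexBody K)
    {r : ℝ} (hr : 0 < r) (hb : closedBall 0 r ⊆ K) (hG : IsCompact G)
    (hKG : K ⊆ interior G)
    (hcones : ∀ x ∈ frontier G, IsEllipsoidalConeAt (cone K x) x)
    {p g : EuclideanSpace ℝ (Fin n)} (hp : p ≠ 0) (hg : g ∈ K) (hgp : ⟪g, p⟫ = suppF K p) :
    ∃ Q : EuclideanSpace ℝ (Fin n) → QuadraticForm ℝ (EuclideanSpace ℝ (Fin n)),
      ∀ x ∈ frontier G, ⟪x, p⟫ = suppF K p →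
        (∀ z, suppF K z = ⟪x, z⟫ → Q x z = 0) ∧
        (∀ z, Q x z = 0 → suppF K z = ⟪x, z⟫ ∨ suppF K (-z) = ⟪x, -z⟫) ∧
        (∀ v, QuadraticMap.polar (Q x) p v = 2 * ⟪g - x, v⟫) ∧
        (∀ g' ∈ K, ⟪g', p⟫ = suppF K p → ∃ c : ℝ, 0 < c ∧ ∀ v, c * ⟪g' - x, v⟫ = ⟪g - x, v⟫) := by
  have key : ∀ x : EuclideanSpace ℝ (Fin n), ∃ Q : QuadraticForm ℝ (EuclideanSpace ℝ (Fin n)),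
      x ∈ frontier G → ⟪x, p⟫ = suppF K p →
        (∀ z, suppF K z = ⟪x, z⟫ → Q z = 0) ∧
        (∀ z, Q z = 0 → suppF K z = ⟪x, z⟫ ∨ suppF K (-z) = ⟪x, -z⟫) ∧
        (∀ v, QuadraticMap.polar Q p v = 2 * ⟪g - x, v⟫) ∧
        (∀ g' ∈ K, ⟪g', p⟫ = suppF K p →
          ∃ c : ℝ, 0 < c ∧ ∀ v, c * ⟪g' - x, v⟫ = ⟪g - x, v⟫) := by
    intro x
    by_cases hx : x ∈ frontier G ∧ ⟪x, p⟫ = suppF K p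
    swap
    · exact ⟨0, fun h1 h2 => absurd ⟨h1, h2⟩ hx⟩
    obtain ⟨hxG, hxp⟩ := hx
    have hxK : x ∉ K := by
      intro h
      rw [hG.isClosed.frontier_eq] at hxG
      exact hxG.2 (hKG h)
    obtain ⟨Q, h1, h2, h3⟩ := cone_data hK (body_not_flat hK.1 hr hb) hxK (hcones x hxG)
    obtain ⟨c, hc, h4⟩ := h3 p hp g hg hxp.symm (hgp.trans hxp.symm)
    refine ⟨(2 / c) • Q, fun _ _ => ⟨?_, ?_, ?_, ?_⟩⟩
    · intro z hz
      simp [h1 z hz]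
    · intro z hz
      apply h2
      simpa [hc.ne'] using hz
    · intro v
      have : QuadraticMap.polar (⇑((2 / c) • Q)) p v = (2 / c) * QuadraticMap.polar Q p v := by
        simp [QuadraticMap.polar]; ring
      rw [this, h4]
      field_simp
    · intro g' hg' hgp'
      obtain ⟨c', hc', h5⟩ := h3 p hp g' hg' hxp.symm (hgp'.trans hxp.symm)
      refine ⟨c' / c, by positivity, fun v => ?_⟩
      have := (h4 v).symm.trans (h5 v)
      field_simp
      linarith
  choose Q hQ using key
  exact ⟨Q, hQ⟩

theorem forms_agree {n : ℕ} {K : Set (EuclideanSpace ℝ (Fin n))}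
    {p g x x' : EuclideanSpace ℝ (Fin n)} (hxp : ⟪x, p⟫ = suppF K p) (hxp' : ⟪x', p⟫ = suppF K p)
    {Q Q' : QuadraticForm ℝ (EuclideanSpace ℝ (Fin n))}
    (h1 : ∀ z, suppF K z = ⟪x, z⟫ → Q z = 0)
    (h2 : ∀ z, Q z = 0 → suppF K z = ⟪x, z⟫ ∨ suppF K (-z) = ⟪x, -z⟫)
    (h3 : ∀ v, QuadraticMap.polar Q p v = 2 * ⟪g - x, v⟫)
    (h1' : ∀ z, suppF K z = ⟪x', z⟫ → Q' z = 0)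
    (h3' : ∀ v, QuadraticMap.polar Q' p v = 2 * ⟪g - x', v⟫)
    (hcol : ¬ Collinear ℝ {g, x, x'}) (z : EuclideanSpace ℝ (Fin n)) (hz : ⟪x - x', z⟫ = 0) :
    Q z = Q' z := by
  have hQp : Q p = 0 := h1 p hxp.symm
  have hQp' : Q' p = 0 := h1' p hxp'.symm
  have hxx : ∀ z : EuclideanSpace ℝ (Fin n), ⟪x - x', z⟫ = 0 → ⟪x, z⟫ = ⟪x', z⟫ := by
    intro z hz
    rw [inner_sub_left] at hz
    linarith
  have hexp : ∀ (Q : QuadraticForm ℝ (EuclideanSpace ℝ (Fin n))) (z : EuclideanSpace ℝ (Fin n))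
      (s : ℝ), Q (z + s • p) = Q z + s * s * Q p + s * QuadraticMap.polar Q p z := by
    intro Q z s
    rw [QuadraticMap.map_add Q, QuadraticMap.polar_smul_right, QuadraticMap.map_smul,
      QuadraticMap.polar_comm]
    simp
  have main : ∀ z : EuclideanSpace ℝ (Fin n), ⟪x - x', z⟫ = 0 → ⟪g - x, z⟫ ≠ 0 → Q z = Q' z := by
    intro z hz hg
    set s := -Q z / (2 * ⟪g - x, z⟫) with hs
    have e1 : Q (z + s • p) = 0 := by
      rw [hexp, hQp, h3, hs]
      field_simp
      ring
    have hw : ⟪x - x', z + s • p⟫ = 0 := by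
      rw [inner_add_right, hz, inner_smul_right, inner_sub_left, hxp, hxp']
      ring
    have e2 : Q' (z + s • p) = 0 := by
      rcases h2 _ e1 with h | h
      · exact h1' _ (h.trans (hxx _ hw))
      · rw [← QuadraticMap.map_neg]
        apply h1'
        rw [h, inner_neg_right, inner_neg_right, hxx _ hw]
    rw [hexp, hQp, h3] at e1
    rw [hexp, hQp', h3'] at e2
    have : ⟪g - x', z⟫ = ⟪g - x, z⟫ := by
      rw [inner_sub_left, inner_sub_left, hxx z hz]
    rw [this] at e2
    linarith
  by_cases hg : ⟪g - x, z⟫ = 0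
  swap
  · exact main z hz hg
  have hcol2 : ¬ Collinear ℝ {x, g, x'} := by
    rwa [Set.insert_comm]
  obtain ⟨z0, hz0, hz0'⟩ := exists_of_not_collinear hcol2
  have hz0g : ⟪g - x, z0⟫ ≠ 0 := by
    intro h
    apply hz0'
    rw [← neg_sub, inner_neg_left, h, neg_zero]
  have a1 := main (z + z0) (by rw [inner_add_right, hz, hz0, add_zero])
    (by rw [inner_add_right, hg, zero_add]; exact hz0g)
  have a2 := main (z - z0) (by rw [inner_sub_right, hz, hz0, sub_zero])
    (by rw [inner_sub_right, hg, zero_sub]; exact neg_ne_zero.2 hz0g)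
  have a3 := main z0 hz0 hz0g
  have par : ∀ Q : QuadraticForm ℝ (EuclideanSpace ℝ (Fin n)),
      Q (z + z0) + Q (z - z0) = 2 * Q z + 2 * Q z0 := by
    intro Q
    rw [sub_eq_add_neg, QuadraticMap.map_add Q z z0, QuadraticMap.map_add Q z (-z0),
      QuadraticMap.polar_neg_right, QuadraticMap.map_neg]
    ring
  have b1 := par Q
  have b2 := par Q'
  linarith

/-! ### Base points -/

theorem exists_unit_perp {n : ℕ} (hn : 3 ≤ n) (a b : EuclideanSpace ℝ (Fin n)) :
    ∃ v : EuclideanSpace ℝ (Fin n), ⟪v, v⟫ = 1 ∧ ⟪v, a⟫ = 0 ∧ ⟪v, b⟫ = 0 := by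
  classical
  set W := Submodule.span ℝ ({a, b} : Set (EuclideanSpace ℝ (Fin n))) with hW
  have h1 : Module.finrank ℝ W ≤ 2 := by
    have h := finrank_span_finset_le_card (R := ℝ) ({a, b} : Finset (EuclideanSpace ℝ (Fin n)))
    have h2 : ({a, b} : Finset (EuclideanSpace ℝ (Fin n))).card ≤ 2 := Finset.card_le_two
    rw [Finset.coe_insert, Finset.coe_singleton] at h
    exact h.trans h2
  have h2 := Submodule.finrank_add_finrank_orthogonal W
  rw [finrank_euclideanSpace_fin] at h2
  have h3 : Wᗮ ≠ ⊥ := by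
    intro h
    rw [h, finrank_bot] at h2
    omega
  obtain ⟨w, hw, hw0⟩ := Submodule.exists_mem_ne_zero_of_ne_bot h3
  have hw' := norm_pos_iff.2 hw0
  rw [Submodule.mem_orthogonal'] at hw
  refine ⟨‖w‖⁻¹ • w, ?_, ?_, ?_⟩
  · rw [inner_smul_left, inner_smul_right, real_inner_self_eq_norm_sq]
    simp
    field_simp
  · rw [inner_smul_left, hw a (Submodule.subset_span (by simp)), mul_zero]
  · rw [inner_smul_left, hw b (Submodule.subset_span (by simp)), mul_zero]

theorem base_points {n : ℕ} (hn : 3 ≤ n) {G : Set (EuclideanSpace ℝ (Fin n))} (hG : IsCompact G)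
    {p g : EuclideanSpace ℝ (Fin n)} (hg : g ∈ interior G) :
    ∃ e : Fin 5 → EuclideanSpace ℝ (Fin n), e 0 = g ∧
      (∀ i, i ≠ 0 → e i ∈ frontier G ∧ ⟪e i, p⟫ = ⟪g, p⟫) ∧
      ∀ a b c : Fin 5, a ≠ b → a ≠ c → b ≠ c → ¬ Collinear ℝ {e a, e b, e c} := by
  obtain ⟨u, huu, hup, -⟩ := exists_unit_perp hn p p
  obtain ⟨v, hvv, hvp, hvu⟩ := exists_unit_perp hn p u
  have huv : ⟪u, v⟫ = 0 := by rw [real_inner_comm, hvu]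
  have hun : ‖u‖ ^ 2 = 1 := by rw [← real_inner_self_eq_norm_sq, huu]
  have hvn : ‖v‖ ^ 2 = 1 := by rw [← real_inner_self_eq_norm_sq, hvv]
  have ray : ∀ α β : ℝ, (α ≠ 0) → ∃ t : ℝ, 0 < t ∧ g + (t • (α • u + β • v)) ∈ frontier G := by
    intro α β hα
    apply ray_frontier_pos hG hg
    intro h
    apply hα
    have h2 : ⟪u, α • u + β • v⟫ = 0 := by rw [h, inner_zero_right]
    rw [inner_add_right, inner_smul_right, inner_smul_right, huu, huv] at h2
    linarith
  obtain ⟨t1, h1, f1⟩ := ray 1 0 (by norm_num)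
  obtain ⟨t2, h2, f2⟩ := ray 1 3 (by norm_num)
  obtain ⟨t3, h3, f3⟩ := ray (-3) 2 (by norm_num)
  obtain ⟨t4, h4, f4⟩ := ray (-3) (-2) (by norm_num)
  obtain ⟨t5, h5, f5⟩ := ray 1 (-3) (by norm_num)
  set U : Fin 6 → ℝ := ![0, t1, t2, -3 * t3, -3 * t4, t5] with hU
  set V : Fin 6 → ℝ := ![0, 0, 3 * t2, 2 * t3, -2 * t4, -3 * t5] with hV
  obtain ⟨e, he0, he⟩ := five_rays t1 t2 t3 t4 t5 h1 h2 h3 h4 h5 U V hU hV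
  set P : Fin 6 → EuclideanSpace ℝ (Fin n) := fun i => g + (U i • u + V i • v) with hP
  have hPG : ∀ i, i ≠ 0 → P i ∈ frontier G := by
    have m : ∀ t α β : ℝ, t • (α • u + β • v) = (α * t) • u + (β * t) • v := by
      intro t α β; module
    rw [m] at f1 f2 f3 f4 f5
    intro i hi
    fin_cases i
    · exact absurd rfl hi
    · simpa [hP, hU, hV] using f1
    · simpa [hP, hU, hV] using f2
    · simpa [hP, hU, hV] using f3
    · simpa [hP, hU, hV] using f4
    · simpa [hP, hU, hV] using f5
  have hPu : ∀ i j, ⟪u, P j - P i⟫ = U j - U i := by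
    intro i j
    simp [hP, inner_sub_right, inner_add_right, inner_smul_right, hun, huv]
  have hPv : ∀ i j, ⟪v, P j - P i⟫ = V j - V i := by
    intro i j
    simp [hP, inner_sub_right, inner_add_right, inner_smul_right, hvn, hvu]
  refine ⟨fun i => P (e i), ?_, ?_, ?_⟩
  · simp [hP, he0, hU, hV]
  · intro i hi
    refine ⟨hPG _ ?_, ?_⟩
    · intro h
      obtain ⟨c, hc1, hc2⟩ : ∃ c : Fin 5, i ≠ c ∧ (0 : Fin 5) ≠ c := by
        clear h; revert hi i; decide
      apply he i 0 c hi hc1 hc2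
      rw [h, he0]
      simp [triArea]
    · simp [hP, inner_add_left, inner_smul_left, hup, hvp]
  · intro a b c hab hac hbc
    apply not_collinear_of_det u v
    rw [hPu, hPu, hPv, hPv]
    exact he a b c hab hac hbc

/-! ### The local quadric -/

theorem quad_analyticAt {n : ℕ} (Q : QuadraticForm ℝ (EuclideanSpace ℝ (Fin n)))
    (y : EuclideanSpace ℝ (Fin n)) : AnalyticAt ℝ Q y := by
  set B := (QuadraticMap.polarBilin Q).toContinuousBilinearMap with hB
  have h : (⇑Q) = fun y => (1 / 2 : ℝ) * B y y := by
    ext y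
    have : B y y = QuadraticMap.polar Q y y := rfl
    rw [this, QuadraticMap.polar_self]; simp
  rw [h]
  apply AnalyticAt.mul analyticAt_const
  exact (B.analyticAt_bilinear (y, y)).comp₂ analyticAt_id analyticAt_id

theorem quad_continuous {n : ℕ} (Q : QuadraticForm ℝ (EuclideanSpace ℝ (Fin n))) :
    Continuous Q :=
  continuous_iff_continuousAt.2 fun y => (quad_analyticAt Q y).continuousAt

theorem quad_dense {n : ℕ} (Q : QuadraticForm ℝ (EuclideanSpace ℝ (Fin n)))
    (hQ : ∃ v, Q v ≠ 0) : Dense {y | Q y ≠ 0} := by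
  obtain ⟨v, hv⟩ := hQ
  have hv0 : v ≠ 0 := by
    rintro rfl
    simp at hv
  have hv' := norm_pos_iff.2 hv0
  rw [Metric.dense_iff]
  intro y r hr
  by_contra hempty
  have hz : ∀ z ∈ ball y r, Q z = 0 := by
    intro z hz
    by_contra h
    exact hempty ⟨z, hz, h⟩
  set t := r / (2 * ‖v‖) with ht
  have htpos : 0 < t := by positivity
  have htn : ‖t • v‖ < r := by
    rw [norm_smul, Real.norm_of_nonneg htpos.le, ht]
    have : r / (2 * ‖v‖) * ‖v‖ = r / 2 := by field_simp
    rw [this]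
    linarith
  have a1 := hz y (by simpa using hr)
  have a2 := hz (y + t • v) (by simpa using htn)
  have a3 := hz (y + -(t • v)) (by simpa using htn)
  rw [QuadraticMap.map_add Q, a1] at a2 a3
  rw [QuadraticMap.polar_neg_right, QuadraticMap.map_neg] at a3
  have a4 : Q (t • v) = 0 := by linarith
  rw [QuadraticMap.map_smul] at a4
  simp [htpos.ne', hv] at a4

theorem max_unique {n : ℕ} {g g' a b : EuclideanSpace ℝ (Fin n)} {c c' : ℝ}
    (h1 : c • (g' - a) = g - a) (h2 : c' • (g' - b) = g - b) (hcol : ¬ Collinear ℝ {g, a, b}) :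
    g' = g := by
  by_contra hne
  have hc : 1 - c ≠ 0 := by
    intro h
    have : c = 1 := by linarith
    rw [this, one_smul] at h1
    exact hne (sub_left_injective h1)
  have hc' : 1 - c' ≠ 0 := by
    intro h
    have : c' = 1 := by linarith
    rw [this, one_smul] at h2
    exact hne (sub_left_injective h2)
  apply hcol
  rw [collinear_iff_of_mem (p₀ := g) (by simp)]
  refine ⟨g' - g, ?_⟩
  have key : ∀ (a : EuclideanSpace ℝ (Fin n)) (c : ℝ), 1 - c ≠ 0 → c • (g' - a) = g - a →
      a = (-(c / (1 - c))) • (g' - g) + g := by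
    intro a c hc h
    have h3 : c • (g' - g) = (1 - c) • (g - a) := by
      have : c • (g' - g) = c • (g' - a) - c • (g - a) := by module
      rw [this, h]; module
    have h4 : (c / (1 - c)) • (g' - g) = g - a := by
      rw [div_eq_inv_mul, mul_smul, h3, smul_smul, inv_mul_cancel₀ hc, one_smul]
    rw [neg_smul, h4]; abel
  intro q hq
  simp only [Set.mem_insert_iff, Set.mem_singleton_iff] at hq
  rcases hq with rfl | rfl | rfl
  · exact ⟨0, by simp⟩
  · exact ⟨_, key _ _ hc h1⟩
  · exact ⟨_, key _ _ hc' h2⟩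

theorem near_max {n : ℕ} {K : Set (EuclideanSpace ℝ (Fin n))} (hK : IsCompact K)
    {p g : EuclideanSpace ℝ (Fin n)}
    (huniq : ∀ g' ∈ K, ⟪g', p⟫ = suppF K p → g' = g) {ρ : ℝ} (hρ : 0 < ρ) :
    ∀ᶠ y in nhds p, ∀ g' ∈ K, ⟪g', y⟫ = suppF K y → ‖g' - g‖ < ρ := by
  have hc : IsCompact (K \ ball g ρ) := hK.diff isOpen_ball
  have h := hc.eventually_forall_of_forall_eventually (x₀ := p)
    (P := fun y k => ⟪k, y⟫ < suppF K y) (by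
      intro k hk
      have hlt : ⟪k, p⟫ < suppF K p := by
        refine lt_of_le_of_ne (suppF_le hK hk.1 p) fun he => hk.2 ?_
        rw [huniq k hk.1 he]
        simpa using hρ
      have hs := suppF_continuous hK
      have c1 : ContinuousAt (fun z : EuclideanSpace ℝ (Fin n) × EuclideanSpace ℝ (Fin n) =>
        ⟪z.2, z.1⟫) (p, k) := by fun_prop
      have c2 : ContinuousAt (fun z : EuclideanSpace ℝ (Fin n) × EuclideanSpace ℝ (Fin n) =>
        suppF K z.1) (p, k) := by fun_prop
      exact c1.eventually_lt c2 hlt)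
  filter_upwards [h] with y hy g' hg' he
  by_contra hb
  have := hy g' ⟨hg', by rwa [mem_ball, dist_eq_norm]⟩
  linarith

theorem covering {n : ℕ} (hn : 3 ≤ n) {K G : Set (EuclideanSpace ℝ (Fin n))} (hK : IsCompact K)
    (hG : IsCompact G) (hKG : K ⊆ interior G) {p g : EuclideanSpace ℝ (Fin n)} (hp : p ≠ 0)
    (hg : g ∈ K) (hgp : ⟪g, p⟫ = suppF K p)
    (huniq : ∀ g' ∈ K, ⟪g', p⟫ = suppF K p → g' = g) :
    ∀ᶠ y in nhds p, ∃ x ∈ frontier G, ⟪x, p⟫ = suppF K p ∧ ⟪x, y⟫ = suppF K y := by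
  have hp' := norm_pos_iff.2 hp
  obtain ⟨ρ, hρ, hρG⟩ := Metric.nhds_basis_closedBall.mem_iff.1
    (mem_interior_iff_mem_nhds.1 (hKG hg))
  have hpos : ∀ᶠ y in nhds p, 0 < ⟪p, y⟫ := by
    have c1 : ContinuousAt (fun y : EuclideanSpace ℝ (Fin n) => ⟪p, y⟫) p := by fun_prop
    apply c1.eventually (lt_mem_nhds _)
    show 0 < ⟪p, p⟫
    rw [real_inner_self_eq_norm_sq]
    positivity
  filter_upwards [near_max hK huniq hρ, hpos] with y hy hyp
  obtain ⟨gy, hgy, hgy2⟩ := suppF_att hK ⟨g, hg⟩ y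
  have hd := hy gy hgy hgy2
  set α := ⟪p, y⟫ / ‖p‖ ^ 2 with hα
  have hα0 : 0 < α := by positivity
  set w := y - α • p with hw
  have hwp : ⟪w, p⟫ = 0 := by
    rw [hw, inner_sub_left, inner_smul_left, real_inner_self_eq_norm_sq, real_inner_comm, hα]
    simp only [conj_trivial]
    field_simp
    ring
  have hyw : y = α • p + w := by rw [hw]; abel
  set δ := suppF K y - ⟪g, y⟫ with hδ
  have hδ0 : 0 ≤ δ := by
    have := suppF_le hK hg y
    linarith
  have hδ1 : δ ≤ ρ * ‖w‖ := by
    have e1 : δ = ⟪gy - g, y⟫ := by rw [hδ, ← hgy2, inner_sub_left]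
    have e2 : ⟪gy - g, y⟫ = α * ⟪gy - g, p⟫ + ⟪gy - g, w⟫ := by
      conv_lhs => rw [hyw]
      rw [inner_add_right, inner_smul_right]
    have e3 : ⟪gy - g, p⟫ ≤ 0 := by
      rw [inner_sub_left, hgp]
      linarith [suppF_le hK hgy p]
    have e4 : α * ⟪gy - g, p⟫ ≤ 0 := mul_nonpos_of_nonneg_of_nonpos hα0.le e3
    have e5 := real_inner_le_norm (gy - g) w
    have e6 : ‖gy - g‖ * ‖w‖ ≤ ρ * ‖w‖ := mul_le_mul_of_nonneg_right hd.le (norm_nonneg _)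
    linarith
  set q := g + (δ / ‖w‖ ^ 2) • w with hq
  have hwy : ⟪w, y⟫ = ‖w‖ ^ 2 := by
    conv_lhs => rw [hyw]
    rw [inner_add_right, inner_smul_right, hwp, real_inner_self_eq_norm_sq]
    ring
  have hqp : ⟪q, p⟫ = suppF K p := by
    rw [hq, inner_add_left, inner_smul_left, hwp, hgp]; simp
  have hqy : ⟪q, y⟫ = suppF K y := by
    rw [hq, inner_add_left, inner_smul_left, hwy]
    simp only [conj_trivial]
    by_cases h0 : ‖w‖ = 0
    · rw [h0] at hδ1 ⊢
      have : δ = 0 := by linarith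
      linarith
    · have : δ / ‖w‖ ^ 2 * ‖w‖ ^ 2 = δ := by field_simp
      rw [this, hδ]
      ring
  have hqG : q ∈ G := by
    apply hρG
    rw [mem_closedBall, dist_eq_norm, hq, add_sub_cancel_left, norm_smul,
      Real.norm_of_nonneg (by positivity)]
    by_cases h0 : ‖w‖ = 0
    · rw [h0]; simpa using hρ.le
    · have hwpos : 0 < ‖w‖ := lt_of_le_of_ne (norm_nonneg _) (Ne.symm h0)
      have : δ / ‖w‖ ^ 2 * ‖w‖ = δ / ‖w‖ := by field_simp
      rw [this, div_le_iff₀ hwpos]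
      exact hδ1
  obtain ⟨v, hvv, hvp, hvy⟩ := exists_unit_perp hn p y
  have hv0 : v ≠ 0 := by
    rintro rfl
    simp at hvv
  obtain ⟨t, -, ht⟩ := ray_frontier hG hqG hv0
  refine ⟨_, ht, ?_, ?_⟩
  · rw [inner_add_left, inner_smul_left, hvp, hqp]; simp
  · rw [inner_add_left, inner_smul_left, hvy, hqy]; simp

theorem local_quadric {n : ℕ} (hn : 3 ≤ n) {K G : Set (EuclideanSpace ℝ (Fin n))}
    (hK : IsConvexBody K) {r : ℝ} (hr : 0 < r) (hb : closedBall 0 r ⊆ K) (hG : IsCompact G)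
    (hKG : K ⊆ interior G)
    (hcones : ∀ x ∈ frontier G, IsEllipsoidalConeAt (cone K x) x)
    {p : EuclideanSpace ℝ (Fin n)} (hp : p ≠ 0) :
    ∃ (B : QuadraticForm ℝ (EuclideanSpace ℝ (Fin n))) (l : EuclideanSpace ℝ (Fin n) →ₗ[ℝ] ℝ)
      (k : ℝ), l p + 2 * k * suppF K p = -2 ∧
      ∀ᶠ y in nhds p, B y + suppF K y * l y + k * suppF K y ^ 2 = 0 := by
  have hKc := hK.1
  obtain ⟨g, hg, hgp⟩ := suppF_att hKc (hK.2.2.mono interior_subset) p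
  obtain ⟨Q, hQ⟩ := local_forms hK hr hb hG hKG hcones hp hg hgp
  obtain ⟨e, he0, heX, he⟩ := base_points hn hG (p := p) (hKG hg)
  rw [hgp] at heX
  have huniq : ∀ g' ∈ K, ⟪g', p⟫ = suppF K p → g' = g := by
    intro g' hg' hgp'
    obtain ⟨c, -, h1⟩ := (hQ (e 1) (heX 1 (by decide)).1 (heX 1 (by decide)).2).2.2.2 g' hg' hgp'
    obtain ⟨c', -, h2⟩ := (hQ (e 2) (heX 2 (by decide)).1 (heX 2 (by decide)).2).2.2.2 g' hg' hgp'
    apply max_unique (a := e 1) (b := e 2) (c := c) (c' := c')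
    · apply ext_inner_right ℝ
      intro v
      rw [inner_smul_left]
      exact h1 v
    · apply ext_inner_right ℝ
      intro v
      rw [inner_smul_left]
      exact h2 v
    · rw [← he0]
      exact he 0 1 2 (by decide) (by decide) (by decide)
  set X : Set (EuclideanSpace ℝ (Fin n)) := {x | x ∈ frontier G ∧ ⟪x, p⟫ = suppF K p} with hX
  obtain ⟨B, l, k, hlk, hfin⟩ := exists_quadric p g (suppF K p) X Q (fun x hx => hx.2)
    (fun x hx => (hQ x hx.1 hx.2).2.2.1)
    (fun x hx x' hx' hcol y hy => forms_agree hx.2 hx'.2 (hQ x hx.1 hx.2).1 (hQ x hx.1 hx.2).2.1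
      (hQ x hx.1 hx.2).2.2.1 (hQ x' hx'.1 hx'.2).1 (hQ x' hx'.1 hx'.2).2.2.1 hcol y hy)
    e he0 heX he
  refine ⟨B, l, k, hlk, ?_⟩
  set bad := {x | x ∈ X ∧ ¬ ∀ y, Q x y = B y + ⟪x, y⟫ * l y + k * ⟪x, y⟫ ^ 2} with hbad
  have hdense : Dense (⋂ x ∈ bad, {y | Q x y ≠ 0}) := by
    apply dense_biInter_of_isOpen
    · intro x _
      exact isOpen_ne_fun (quad_continuous (Q x)) continuous_const
    · exact hfin.countable
    · intro x hx
      apply quad_dense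
      by_contra! h0
      have h1 := (hQ x hx.1.1 hx.1.2).2.2.1 (g - x)
      simp only [QuadraticMap.polar, h0] at h1
      have h2 : g - x = 0 := by
        rw [← inner_self_eq_zero (𝕜 := ℝ)]
        linarith
      rw [sub_eq_zero] at h2
      have h3 := hx.1.1
      rw [hG.isClosed.frontier_eq] at h3
      exact h3.2 (hKG (h2 ▸ hg))
  have hcont : Continuous fun y => B y + suppF K y * l y + k * suppF K y ^ 2 := by
    have c1 := quad_continuous B
    have c2 := suppF_continuous hKc
    have c3 : Continuous l := l.continuous_of_finiteDimensional
    fun_prop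
  obtain ⟨U, hU, hUo, hpU⟩ := _root_.eventually_nhds_iff.1 (covering hn hKc hG hKG hp hg hgp huniq)
  refine _root_.eventually_nhds_iff.2 ⟨U, ?_, hUo, hpU⟩
  intro y0 hy0
  by_contra hne
  have hopen : IsOpen (U ∩ {y | B y + suppF K y * l y + k * suppF K y ^ 2 ≠ 0}) :=
    hUo.inter (isOpen_ne_fun hcont continuous_const)
  obtain ⟨y, ⟨hyU, hyF⟩, hyD⟩ := hdense.inter_open_nonempty _ hopen ⟨y0, hy0, hne⟩
  obtain ⟨x, hxG, hxp, hxy⟩ := hU y hyU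
  have hQy : Q x y = 0 := (hQ x hxG hxp).1 y hxy.symm
  have hxb : x ∉ bad := by
    intro hxb
    exact (Set.mem_iInter₂.1 hyD x hxb) hQy
  have hgood : ∀ y, Q x y = B y + ⟪x, y⟫ * l y + k * ⟪x, y⟫ ^ 2 := by
    by_contra h
    exact hxb ⟨⟨hxG, hxp⟩, h⟩
  have := hgood y
  rw [hQy, hxy] at this
  exact hyF this.symm

/-! ### Analyticity and the global quadric -/

theorem suppF_analyticAt {n : ℕ} {K : Set (EuclideanSpace ℝ (Fin n))} (hK : IsCompact K)
    {p : EuclideanSpace ℝ (Fin n)}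
    {B : QuadraticForm ℝ (EuclideanSpace ℝ (Fin n))} {l : EuclideanSpace ℝ (Fin n) →ₗ[ℝ] ℝ}
    {k : ℝ} (hlk : l p + 2 * k * suppF K p = -2)
    (hF : ∀ᶠ y in nhds p, B y + suppF K y * l y + k * suppF K y ^ 2 = 0) :
    AnalyticAt ℝ (suppF K) p := by
  have hB := quad_analyticAt B p
  have hl : AnalyticAt ℝ l p := (LinearMap.toContinuousLinearMap l).analyticAt p
  have hlc : Continuous l := l.continuous_of_finiteDimensional
  have hh := suppF_continuous hK
  by_cases hk : k = 0
  · subst hk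
    have hlp : l p = -2 := by linarith
    have hne : ∀ᶠ y in nhds p, l y ≠ 0 :=
      hlc.continuousAt.eventually_ne (by rw [hlp]; norm_num)
    have ha : AnalyticAt ℝ (fun y => -B y / l y) p :=
      hB.neg.fun_div hl (by rw [hlp]; norm_num)
    refine ha.congr ?_
    filter_upwards [hF, hne] with y h1 h2
    field_simp
    linarith
  · have hneg : ∀ᶠ y in nhds p, l y + 2 * k * suppF K y < 0 := by
      have c : ContinuousAt (fun y => l y + 2 * k * suppF K y) p := by fun_prop
      exact c.eventually_lt continuousAt_const (by rw [hlk]; norm_num)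
    have hsq : ∀ y, B y + suppF K y * l y + k * suppF K y ^ 2 = 0 →
        l y * l y - 4 * k * B y = (l y + 2 * k * suppF K y) ^ 2 := by
      intro y hy
      linear_combination (-4 * k) * hy
    have hΔ : AnalyticAt ℝ (fun y => l y * l y - 4 * k * B y) p :=
      (hl.fun_mul hl).fun_sub (analyticAt_const.fun_mul hB)
    have hΔp : l p * l p - 4 * k * B p ≠ 0 := by
      rw [hsq p hF.self_of_nhds, hlk]; norm_num
    have hs : AnalyticAt ℝ (fun y => √(l y * l y - 4 * k * B y)) p := by
      have h0 : AnalyticAt ℝ Real.sqrt (l p * l p - 4 * k * B p) :=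
        analyticWithinAt_univ.1
          (contDiffWithinAt_omega_iff_analyticWithinAt.1 (Real.contDiffAt_sqrt hΔp).contDiffWithinAt)
      exact AnalyticAt.fun_comp (g := Real.sqrt) h0 hΔ
    have ha : AnalyticAt ℝ (fun y => (-√(l y * l y - 4 * k * B y) - l y) / (2 * k)) p :=
      (hs.fun_neg.fun_sub hl).fun_div analyticAt_const (by simpa using hk)
    refine ha.congr ?_
    filter_upwards [hF, hneg] with y h1 h2
    rw [hsq y h1, Real.sqrt_sq_eq_abs, abs_of_neg h2]
    field_simp
    ring

theorem global_quadric {n : ℕ} (hn : 3 ≤ n) {K G : Set (EuclideanSpace ℝ (Fin n))}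
    (hK : IsConvexBody K) (hs : K = -K) {r : ℝ} (hr : 0 < r) (hb : closedBall 0 r ⊆ K)
    (hG : IsCompact G) (hKG : K ⊆ interior G)
    (hcones : ∀ x ∈ frontier G, IsEllipsoidalConeAt (cone K x) x) :
    ∃ q : QuadraticForm ℝ (EuclideanSpace ℝ (Fin n)), ∀ y, suppF K y ^ 2 = q y := by
  have hKc := hK.1
  have han : ∀ p : EuclideanSpace ℝ (Fin n), p ≠ 0 → AnalyticAt ℝ (suppF K) p := by
    intro p hp
    obtain ⟨B, l, k, h1, h2⟩ := local_quadric hn hK hr hb hG hKG hcones hp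
    exact suppF_analyticAt hKc h1 h2
  obtain ⟨p, hpp, -, -⟩ := exists_unit_perp hn (0 : EuclideanSpace ℝ (Fin n)) 0
  have hp : p ≠ 0 := by
    rintro rfl
    simp at hpp
  obtain ⟨B, l, k, h1, h2⟩ := local_quadric hn hK hr hb hG hKG hcones hp
  have hF : ∀ y : EuclideanSpace ℝ (Fin n), y ≠ 0 →
      B y + suppF K y * l y + k * suppF K y ^ 2 = 0 := by
    have hA : AnalyticOnNhd ℝ (fun y => B y + suppF K y * l y + k * suppF K y ^ 2)
        ({0}ᶜ : Set (EuclideanSpace ℝ (Fin n))) := by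
      intro y hy
      have hl : AnalyticAt ℝ l y := (LinearMap.toContinuousLinearMap l).analyticAt y
      have hh := han y hy
      exact ((quad_analyticAt B y).fun_add (hh.fun_mul hl)).fun_add
        (analyticAt_const.fun_mul (hh.fun_pow 2))
    have hconn : IsPreconnected ({0}ᶜ : Set (EuclideanSpace ℝ (Fin n))) := by
      apply (isConnected_compl_singleton_of_one_lt_rank _ 0).isPreconnected
      rw [← Module.finrank_eq_rank, finrank_euclideanSpace_fin]
      exact_mod_cast (by omega : 1 < n)
    have := hA.eqOn_zero_of_preconnected_of_eventuallyEq_zero hconn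
      (show p ∈ ({0}ᶜ : Set (EuclideanSpace ℝ (Fin n))) from hp) h2
    intro y hy
    exact this (show y ∈ ({0}ᶜ : Set (EuclideanSpace ℝ (Fin n))) from hy)
  have hl0 : ∀ y : EuclideanSpace ℝ (Fin n), y ≠ 0 → l y = 0 := by
    intro y hy
    have a1 := hF y hy
    have a2 := hF (-y) (neg_ne_zero.2 hy)
    rw [suppF_even hs, QuadraticMap.map_neg, map_neg] at a2
    have a3 : suppF K y * l y = 0 := by linarith
    exact (mul_eq_zero.1 a3).resolve_left (suppF_pos hKc hr hb hy).ne'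
  have hk : k ≠ 0 := by
    rintro rfl
    rw [hl0 p hp] at h1
    norm_num at h1
  refine ⟨(-1 / k) • B, fun y => ?_⟩
  by_cases hy : y = 0
  · subst hy
    have : suppF K (0 : EuclideanSpace ℝ (Fin n)) = 0 :=
      suppF_eq hKc (by simp) ⟨0, hb (by simp [hr.le]), by simp⟩
    simp [this]
  · have a1 := hF y hy
    rw [hl0 y hy] at a1
    simp only [_root_.smul_apply, smul_eq_mul]
    field_simp
    linarith

theorem ellipsoid_of_quad {n : ℕ} {K : Set (EuclideanSpace ℝ (Fin n))}
    (hK : IsConvexBody K) {r : ℝ} (hr : 0 < r) (hb : closedBall 0 r ⊆ K)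
    (q : QuadraticForm ℝ (EuclideanSpace ℝ (Fin n))) (hq : ∀ y, suppF K y ^ 2 = q y) :
    IsEllipsoid K := by
  have hKc := hK.1
  have hKne : K.Nonempty := ⟨0, hb (by simp [hr.le])⟩
  have hnn : ∀ y, 0 ≤ suppF K y := by
    intro y
    have := suppF_le hKc (hb (by simp [hr.le] : (0 : EuclideanSpace ℝ (Fin n)) ∈ closedBall 0 r)) y
    simpa using this
  have hpos : ∀ y, y ≠ 0 → 0 < q y := by
    intro y hy
    rw [← hq]
    have := suppF_pos hKc hr hb hy
    positivity
  obtain ⟨S, hS⟩ : ∃ S : EuclideanSpace ℝ (Fin n) ≃ₗ[ℝ] EuclideanSpace ℝ (Fin n),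
      ∀ y, ‖S y‖ ^ 2 = q y := by
    have hw := QuadraticForm.equivalent_signType_weighted_sum_squared q
    rw [finrank_euclideanSpace_fin] at hw
    obtain ⟨w, ⟨φ⟩⟩ := hw
    have hφ : ∀ y, ∑ i, (w i : ℝ) * (φ y i * φ y i) = q y := by
      intro y
      rw [← φ.map_app y, QuadraticMap.weightedSumSquares_apply]
      rfl
    have hw1 : ∀ i, (w i : ℝ) = 1 := by
      intro i
      have h1 := hφ (φ.symm (Pi.single i 1))
      have h2 : φ (φ.symm (Pi.single i 1)) = (Pi.single i 1 : Fin n → ℝ) :=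
        φ.toLinearEquiv.apply_symm_apply _
      rw [h2] at h1
      have h3 : φ.symm (Pi.single i 1) ≠ 0 := by
        intro h0
        rw [h0] at h2
        have h4 : φ 0 = 0 := φ.toLinearEquiv.map_zero
        rw [h4] at h2
        have := congrFun h2 i
        simp at this
      have h5 := hpos _ h3
      rw [← h1] at h5
      simp [Pi.single_apply] at h5
      cases hwi : w i
      · rw [hwi] at h5
        norm_num [SignType.cast] at h5
      · rw [hwi] at h5
        norm_num [SignType.cast] at h5
      · rfl
    refine ⟨φ.toLinearEquiv.trans (WithLp.linearEquiv 2 ℝ (Fin n → ℝ)).symm, fun y => ?_⟩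
    rw [← hφ, EuclideanSpace.norm_sq_eq]
    apply Finset.sum_congr rfl
    intro i _
    rw [hw1, one_mul, Real.norm_eq_abs, sq_abs, pow_two]
    rfl
  have hhS : ∀ y, suppF K y = ‖S y‖ := by
    intro y
    have := (hq y).trans (hS y).symm
    exact (pow_left_inj₀ (hnn y) (norm_nonneg _) two_ne_zero).1 this
  set A := LinearMap.adjoint S.toLinearMap with hA
  have hAi : ∀ x y, ⟪A x, y⟫ = ⟪x, S y⟫ := by
    intro x y
    rw [hA, LinearMap.adjoint_inner_left]
    rfl
  have hinj : Function.Injective A := by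
    rw [← LinearMap.ker_eq_bot, LinearMap.ker_eq_bot']
    intro x hx
    have := hAi x (S.symm x)
    rw [hx, S.apply_symm_apply, inner_zero_left] at this
    exact inner_self_eq_zero.1 this.symm
  set f := LinearEquiv.ofInjectiveEndo A hinj with hf
  have hfA : ∀ x, f x = A x := fun x => rfl
  refine ⟨f.toAffineEquiv, ?_⟩
  apply Set.Subset.antisymm
  · intro k hk
    refine ⟨f.symm k, ?_, f.apply_symm_apply k⟩
    set x := f.symm k with hx
    have hAx : A x = k := by rw [← hfA, hx, f.apply_symm_apply]
    have h1 := hAi x (S.symm x)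
    rw [hAx, S.apply_symm_apply, real_inner_self_eq_norm_sq] at h1
    have h2 := suppF_le hKc hk (S.symm x)
    rw [hhS, S.apply_symm_apply, h1] at h2
    rw [mem_closedBall_zero_iff]
    by_contra! h
    nlinarith
  · rintro _ ⟨x, hx, rfl⟩
    show A x ∈ K
    by_contra hnot
    obtain ⟨F, u, h1, h2⟩ := geometric_hahn_banach_closed_point hK.2.1 hKc.isClosed hnot
    set y := (InnerProductSpace.toDual ℝ (EuclideanSpace ℝ (Fin n))).symm F with hy
    have hFy : ∀ z, F z = ⟪z, y⟫ := by
      intro z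
      rw [real_inner_comm, hy, InnerProductSpace.toDual_symm_apply]
    obtain ⟨k, hk, hk2⟩ := suppF_att hKc hKne y
    have h3 := h1 k hk
    rw [hFy, hk2, hhS] at h3
    rw [hFy, hAi] at h2
    rw [mem_closedBall_zero_iff] at hx
    have h4 := real_inner_le_norm x (S y)
    have h5 : ‖x‖ * ‖S y‖ ≤ 1 * ‖S y‖ := mul_le_mul_of_nonneg_right hx (norm_nonneg _)
    linarith

/-- [MMJ]: if `K` is an O-symmetric convex body inside `G` and all cones over `K` with
apex on `bd G` are ellipsoidal, then `K` is an ellipsoid. -/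
theorem stmt12 {n : ℕ} (hn : 3 ≤ n) (K G : Set (EuclideanSpace ℝ (Fin n)))
    (hK : IsConvexBody K) (hG : IsConvexBody G)
    (hKG : K ⊆ interior G) (hKsym : K = -K)
    (hcones : ∀ x ∈ frontier G, IsEllipsoidalConeAt (cone K x) x) :
    IsEllipsoid K := by
  obtain ⟨r, hr, hb⟩ := exists_ball_subset hK hKsym
  obtain ⟨q, hq⟩ := global_quadric hn hK hKsym hr hb hG.1 hKG hcones
  exact ellipsoid_of_quad hK hr hb q hq
end
end

section
/- Let K and G be convex bodies in R^n (n ≥ 3) with O an interior point of both, such that for every hyperplane Π through O the sections Π ∩ K and Π ∩ G are homothetic (one is a positive scalar multiple plus translation of the other). Then K and G are homothetic. -/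
open Set Metric Function Bornology
open scoped RealInnerProductSpace Pointwise

noncomputable section

section RogersHelpers

variable {E : Type*} [NormedAddCommGroup E] [InnerProductSpace ℝ E]

/-- The section hypothesis (at the origin). -/
def RogersSec (K G : Set E) : Prop :=
  ∀ u : E, u ≠ 0 → ∃ lam : ℝ, 0 < lam ∧ ∃ t : E,
    {p | ⟪u, p⟫ = 0} ∩ G = (fun p => lam • p + t) '' ({p | ⟪u, p⟫ = 0} ∩ K)

/-- Off one direction `d`, the homotheties of the sections through `X` fix `X`. -/
lemma rogers_fix (K G : Set E) (hKc : Convex ℝ K) (hGK : G ⊆ K) (hsec : RogersSec K G)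
    (X e : E) (hX : X ∈ G) (hpos : 0 < ⟪e, X⟫) (hsup : ∀ p ∈ K, ⟪e, p⟫ ≤ ⟪e, X⟫)
    (hmax : ∀ p ∈ G, ⟪e, p⟫ = ⟪e, X⟫ → ‖p‖ ≤ ‖X‖)
    (hdim : ∃ d : E, d ∉ Submodule.span ℝ {X}) :
    ∃ d : E, d ∉ Submodule.span ℝ {X} ∧ ∀ u : E, ⟪u, X⟫ = 0 → ⟪u, d⟫ ≠ 0 →
      ∀ lam : ℝ, 0 < lam → ∀ t : E,
      {p | ⟪u, p⟫ = 0} ∩ G = (fun p => lam • p + t) '' ({p | ⟪u, p⟫ = 0} ∩ K) →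
      lam • X + t = X := by
  set h := ⟪e, X⟫ with hh
  -- basic facts on a section through `X`
  have basic : ∀ u : E, ⟪u, X⟫ = 0 → ∀ lam : ℝ, 0 < lam → ∀ t : E,
      {p | ⟪u, p⟫ = 0} ∩ G = (fun p => lam • p + t) '' ({p | ⟪u, p⟫ = 0} ∩ K) →
      (⟪e, t⟫ = (1 - lam) * h) ∧
      (∀ p ∈ K, ⟪u, p⟫ = 0 → lam • p + t ∈ G ∧ ⟪u, lam • p + t⟫ = 0) ∧
      ∃ q ∈ K, ⟪u, q⟫ = 0 ∧ ⟪e, q⟫ = h ∧ lam • q + t = X := by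
    intro u hu lam hl t heq
    have h1 : ∀ p ∈ K, ⟪u, p⟫ = 0 → lam • p + t ∈ G ∧ ⟪u, lam • p + t⟫ = 0 := by
      intro p hp hup
      have : lam • p + t ∈ {p | ⟪u, p⟫ = 0} ∩ G := by
        rw [heq]; exact ⟨p, ⟨hup, hp⟩, rfl⟩
      exact ⟨this.2, this.1⟩
    have hXm : X ∈ {p | ⟪u, p⟫ = 0} ∩ G := ⟨hu, hX⟩
    rw [heq] at hXm
    obtain ⟨q, ⟨huq, hqK⟩, hq⟩ := hXm
    have hq' : lam • q + t = X := hq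
    have e1 : lam * ⟪e, q⟫ + ⟪e, t⟫ = h := by
      rw [hh, ← hq', inner_add_right, inner_smul_right]
    have e2 := hsup q hqK
    have e3 := hsup _ (hGK (h1 X (hGK hX) hu).1)
    rw [inner_add_right, inner_smul_right, ← hh] at e3
    have e4 : ⟪e, q⟫ = h := by
      have : lam * h ≤ lam * ⟪e, q⟫ := by linarith
      exact le_antisymm e2 (le_of_mul_le_mul_left this hl)
    refine ⟨?_, h1, q, hqK, huq, e4, hq'⟩
    rw [e4] at e1; linarith
  by_cases hA : ∀ Z ∈ G, ⟪e, Z⟫ = h → Z = X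
  · obtain ⟨d, hd⟩ := hdim
    refine ⟨d, hd, ?_⟩
    intro u hu _ lam hl t heq
    obtain ⟨h1, h2, -⟩ := basic u hu lam hl t heq
    refine hA _ (h2 X (hGK hX) hu).1 ?_
    rw [inner_add_right, inner_smul_right, h1, ← hh]; ring
  push Not at hA
  obtain ⟨Z, hZG, hZe, hZX⟩ := hA
  set w : E := h • X - (‖X‖ ^ 2) • e with hw
  have hwp : ∀ p, ⟪w, p⟫ = h * ⟪X, p⟫ - ‖X‖ ^ 2 * ⟪e, p⟫ := by
    intro p; rw [hw, inner_sub_left, real_inner_smul_left, real_inner_smul_left]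
  have hwX : ⟪w, X⟫ = 0 := by
    rw [hwp, real_inner_self_eq_norm_sq, ← hh]; ring
  have hG1 : ∀ p ∈ G, ⟪e, p⟫ = h → 0 ≤ ⟪w, p⟫ → p = X := by
    intro p hp he hwp0
    rw [hwp, he] at hwp0
    have a1 : ‖X‖ ^ 2 ≤ ⟪X, p⟫ := by
      have : h * ‖X‖ ^ 2 ≤ h * ⟪X, p⟫ := by linarith
      exact le_of_mul_le_mul_left this hpos
    have a2 := hmax p hp he
    have a3 : ‖p - X‖ ^ 2 ≤ 0 := by
      rw [norm_sub_sq_real, real_inner_comm]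
      nlinarith [norm_nonneg p, norm_nonneg X]
    have : ‖p - X‖ = 0 := by
      have := sq_nonneg ‖p - X‖
      exact pow_eq_zero_iff (two_ne_zero) |>.1 (le_antisymm a3 this)
    exact sub_eq_zero.1 (norm_eq_zero.1 this)
  have hwZ : ⟪w, Z⟫ < 0 := by
    by_contra hc
    exact hZX (hG1 Z hZG hZe (not_lt.1 hc))
  have hw0 : w ≠ 0 := by
    rintro h0; rw [h0, inner_zero_left] at hwZ; exact lt_irrefl _ hwZ
  have hK1 : ∀ p ∈ K, ⟪e, p⟫ = h → ⟪w, p⟫ = 0 → p = X := by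
    intro p hp he hwp0
    obtain ⟨lam, hl, t, heq⟩ := hsec w hw0
    obtain ⟨h1, h2, -⟩ := basic w hwX lam hl t heq
    have key : ∀ p ∈ K, ⟪e, p⟫ = h → ⟪w, p⟫ = 0 → lam • p + t = X := by
      intro p hp he hwp0
      obtain ⟨b1, b2⟩ := h2 p hp hwp0
      refine hG1 _ b1 ?_ b2.ge
      rw [inner_add_right, inner_smul_right, h1, he]; ring
    have k1 := key p hp he hwp0
    have k2 := key X (hGK hX) rfl hwX
    have : lam • p = lam • X := by
      rw [← k2] at k1
      exact add_right_cancel (k1.trans (by rw [k2]))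
    exact smul_right_injective E hl.ne' this
  -- reduction to the sign at the preimage of `X`
  have fin : ∀ u : E, ⟪u, X⟫ = 0 → ∀ lam : ℝ, 0 < lam → ∀ t : E,
      {p | ⟪u, p⟫ = 0} ∩ G = (fun p => lam • p + t) '' ({p | ⟪u, p⟫ = 0} ∩ K) →
      (∀ q ∈ K, ⟪u, q⟫ = 0 → ⟪e, q⟫ = h → ⟪w, q⟫ ≤ 0) → lam • X + t = X := by
    intro u hu lam hl t heq hq
    obtain ⟨h1, h2, q, hqK, hqu, hqe, hqX⟩ := basic u hu lam hl t heq
    refine hG1 _ (h2 X (hGK hX) hu).1 ?_ ?_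
    · rw [inner_add_right, inner_smul_right, h1, ← hh]; ring
    · have := hq q hqK hqu hqe
      have e1 : lam * ⟪w, q⟫ + ⟪w, t⟫ = 0 := by
        rw [← hwX, ← hqX, inner_add_right, inner_smul_right]
      rw [inner_add_right, inner_smul_right, hwX]
      nlinarith
  by_cases hB : ∀ Y ∈ K, ⟪e, Y⟫ = h → ⟪w, Y⟫ ≤ 0
  · obtain ⟨d, hd⟩ := hdim
    exact ⟨d, hd, fun u hu _ lam hl t heq => fin u hu lam hl t heq
      (fun q hq _ he => hB q hq he)⟩
  push Not at hB
  obtain ⟨Y, hYK, hYe, hYw⟩ := hB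
  refine ⟨Y, ?_, ?_⟩
  · intro hs
    obtain ⟨a, rfl⟩ := Submodule.mem_span_singleton.1 hs
    rw [inner_smul_right, hwX] at hYw
    simp at hYw
  intro u hu hud lam hl t heq
  refine fin u hu lam hl t heq ?_
  intro q hqK hqu hqe
  by_contra hc
  push Not at hc
  have cross : ∀ y ∈ K, ⟪e, y⟫ = h → 0 < ⟪w, y⟫ →
      ⟪w, y⟫ * ⟪u, Z⟫ = ⟪w, Z⟫ * ⟪u, y⟫ := by
    intro y hy hye hyw
    have hD : 0 < ⟪w, y⟫ - ⟪w, Z⟫ := by linarith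
    set D := ⟪w, y⟫ - ⟪w, Z⟫ with hDdef
    have hp : (⟪w, y⟫ / D) • Z + (-⟪w, Z⟫ / D) • y ∈ K := by
      refine hKc (hGK hZG) hy (by positivity) (div_nonneg (by linarith) hD.le) ?_
      rw [← add_div]; rw [div_eq_one_iff_eq hD.ne']; rw [hDdef]; ring
    have hpX := hK1 _ hp ?_ ?_
    · have := hu
      rw [← hpX, inner_add_right, inner_smul_right, inner_smul_right] at this
      field_simp at this
      linarith
    · rw [inner_add_right, inner_smul_right, inner_smul_right, hZe, hye]
      field_simp
      rw [hDdef]; ring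
    · rw [inner_add_right, inner_smul_right, inner_smul_right]
      field_simp
      ring
  have c1 := cross q hqK hqe hc
  rw [hqu, mul_zero] at c1
  have c2 : ⟪u, Z⟫ = 0 := by
    rcases mul_eq_zero.1 c1 with h0 | h0
    · linarith
    · exact h0
  have c3 := cross Y hYK hYe hYw
  rw [c2, mul_zero] at c3
  rcases mul_eq_zero.1 c3.symm with h0 | h0
  · linarith
  · exact hud h0

/-- Two homotheties with the same centre carrying a compact set, which has another point than
the centre, onto the same set have the same ratio. -/
lemma rogers_ratio_le (S T : Set E) (hS : IsCompact S) (X : E)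
    (a b : ℝ) (ha : 0 < a) (hb : 0 < b)
    (hne : ∃ p ∈ S, p ≠ X)
    (hTa : T = (fun p => a • p + (1 - a) • X) '' S)
    (hTb : T = (fun p => b • p + (1 - b) • X) '' S) : a ≤ b := by
  obtain ⟨p, hp, hpX⟩ := hne
  obtain ⟨m, hm, hmax⟩ := hS.exists_isMaxOn ⟨p, hp⟩
    (f := fun p => ‖p - X‖) (by fun_prop)
  have hm0 : 0 < ‖m - X‖ := lt_of_lt_of_le (norm_pos_iff.2 (sub_ne_zero.2 hpX)) (hmax hp)
  have h1 : a • m + (1 - a) • X ∈ T := by rw [hTa]; exact ⟨m, hm, rfl⟩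
  rw [hTb] at h1
  obtain ⟨q, hq, hqe⟩ := h1
  have h2 : b • (q - X) = a • (m - X) := by
    have hqe' : b • q + (1 - b) • X = a • m + (1 - a) • X := hqe
    have : b • (q - X) = (b • q + (1 - b) • X) - X := by module
    rw [this, hqe']; module
  have h3 : b * ‖q - X‖ = a * ‖m - X‖ := by
    have := congrArg norm h2
    rwa [norm_smul, norm_smul, Real.norm_of_nonneg ha.le, Real.norm_of_nonneg hb.le] at this
  have h4 : ‖q - X‖ ≤ ‖m - X‖ := hmax hq
  have h5 : a * ‖m - X‖ ≤ b * ‖m - X‖ := by rw [← h3]; gcongr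
  exact le_of_mul_le_mul_right h5 hm0

/-- Given `d ∉ span {X, p}`, there is `u` orthogonal to `X`, `p` and not to `d`. -/
lemma rogers_exists_u [FiniteDimensional ℝ E] (X p d : E)
    (hd : d ∉ Submodule.span ℝ {X, p}) : ∃ u : E, ⟪u, X⟫ = 0 ∧ ⟪u, p⟫ = 0 ∧ ⟪u, d⟫ ≠ 0 := by
  by_contra hc
  push Not at hc
  apply hd
  rw [← Submodule.orthogonal_orthogonal (Submodule.span ℝ {X, p})]
  rw [Submodule.mem_orthogonal]
  intro u hu
  rw [Submodule.mem_orthogonal'] at hu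
  exact hc u (hu X (Submodule.subset_span (by simp))) (hu p (Submodule.subset_span (by simp)))

lemma rogers_dense [FiniteDimensional ℝ E] (K : Set E) (hKc : Convex ℝ K)
    (hKi : (interior K).Nonempty) (W : Submodule ℝ E) (hW : W ≠ ⊤) :
    K ⊆ closure (K \ (W : Set E)) := by
  have h1 : K ⊆ closure (interior K) := by
    rw [hKc.closure_interior_eq_closure_of_nonempty_interior hKi]; exact subset_closure
  have h2 : Dense ((W : Set E)ᶜ) := by
    rw [← interior_eq_empty_iff_dense_compl]
    by_contra hne
    exact hW (Submodule.eq_top_of_nonempty_interior' W (nonempty_iff_ne_empty.2 hne))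
  have h3 : interior K ⊆ closure (interior K ∩ (W : Set E)ᶜ) :=
    h2.open_subset_closure_inter isOpen_interior
  refine h1.trans ((closure_minimal h3 isClosed_closure).trans (closure_mono ?_))
  exact fun x hx => ⟨interior_subset hx.1, hx.2⟩

lemma rogers_core [FiniteDimensional ℝ E] (hn : 3 ≤ Module.finrank ℝ E) (K G : Set E)
    (hKk : IsCompact K) (hGk : IsCompact G)
    (hKc : Convex ℝ K) (hGc : Convex ℝ G) (hK0 : (0 : E) ∈ interior K)
    (hG0 : (0 : E) ∈ interior G) (hGK : G ⊆ K) (hsec : RogersSec K G)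
    (X e : E) (hX : X ∈ G) (hpos : 0 < ⟪e, X⟫) (hsup : ∀ p ∈ K, ⟪e, p⟫ ≤ ⟪e, X⟫)
    (hmax : ∀ p ∈ G, ⟪e, p⟫ = ⟪e, X⟫ → ‖p‖ ≤ ‖X‖) :
    ∃ lam : ℝ, 0 < lam ∧ ∃ t : E, G = (fun p => lam • p + t) '' K := by
  have hX0 : X ≠ 0 := by rintro rfl; simp at hpos
  have hsp : ∀ a b : E, Submodule.span ℝ {a, b} ≠ ⊤ := by
    intro a b hab
    have h1 : Module.finrank ℝ (Submodule.span ℝ ({a, b} : Set E)) ≤ 2 := by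
      classical
      have := finrank_span_le_card (R := ℝ) ({a, b} : Set E)
      refine this.trans ?_
      rw [Set.toFinset_insert, Set.toFinset_singleton]
      exact Finset.card_le_two
    rw [hab, finrank_top] at h1
    omega
  have hdim : ∃ d : E, d ∉ Submodule.span ℝ {X} := by
    by_contra hc
    push Not at hc
    apply hsp X X
    rw [Set.pair_eq_singleton]
    exact (Submodule.eq_top_iff'.2 hc)
  obtain ⟨d, hd, hfix⟩ := rogers_fix K G hKc hGK hsec X e hX hpos hsup hmax hdim
  have hsec' : ∀ u : E, ⟪u, X⟫ = 0 → ⟪u, d⟫ ≠ 0 → ∃ lam : ℝ, 0 < lam ∧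
      {p | ⟪u, p⟫ = 0} ∩ G =
        (fun p => lam • p + (1 - lam) • X) '' ({p | ⟪u, p⟫ = 0} ∩ K) := by
    intro u hu hud
    have hu0 : u ≠ 0 := by rintro rfl; simp at hud
    obtain ⟨lam, hl, t, heq⟩ := hsec u hu0
    have h1 := hfix u hu hud lam hl t heq
    have ht : t = (1 - lam) • X := by
      rw [sub_smul, one_smul]; exact eq_sub_of_add_eq' h1
    exact ⟨lam, hl, by rw [← ht]; exact heq⟩
  -- restriction to the line through `X`
  have hline : ∀ u : E, ⟪u, X⟫ = 0 → ∀ lam : ℝ, 0 < lam →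
      {p | ⟪u, p⟫ = 0} ∩ G =
        (fun p => lam • p + (1 - lam) • X) '' ({p | ⟪u, p⟫ = 0} ∩ K) →
      G ∩ (Submodule.span ℝ {X} : Set E) =
        (fun p => lam • p + (1 - lam) • X) '' (K ∩ (Submodule.span ℝ {X} : Set E)) := by
    intro u hu lam hl heq
    have hXs : X ∈ Submodule.span ℝ {X} := Submodule.mem_span_singleton_self X
    have hus : ∀ p ∈ Submodule.span ℝ {X}, ⟪u, p⟫ = 0 := by
      intro p hp
      obtain ⟨a, rfl⟩ := Submodule.mem_span_singleton.1 hp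
      rw [inner_smul_right, hu, mul_zero]
    ext p
    constructor
    · rintro ⟨hpG, hps⟩
      have : p ∈ {p | ⟪u, p⟫ = 0} ∩ G := ⟨hus p hps, hpG⟩
      rw [heq] at this
      obtain ⟨q, ⟨-, hqK⟩, hq⟩ := this
      refine ⟨q, ⟨hqK, ?_⟩, hq⟩
      have hq' : lam • q + (1 - lam) • X = p := hq
      have h2 : lam • q ∈ Submodule.span ℝ {X} := by
        rw [eq_sub_of_add_eq hq']
        exact Submodule.sub_mem _ hps (Submodule.smul_mem _ _ hXs)
      exact (Submodule.smul_mem_iff _ hl.ne').1 h2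
    · rintro ⟨q, ⟨hqK, hqs⟩, rfl⟩
      have : lam • q + (1 - lam) • X ∈ {p | ⟪u, p⟫ = 0} ∩ G := by
        rw [heq]; exact ⟨q, ⟨hus q hqs, hqK⟩, rfl⟩
      exact ⟨this.2, Submodule.add_mem _ (Submodule.smul_mem _ _ hqs)
        (Submodule.smul_mem _ _ hXs)⟩
  have hScomp : IsCompact (K ∩ (Submodule.span ℝ {X} : Set E)) :=
    hKk.inter_right (Submodule.closed_of_finiteDimensional _)
  have hSne : ∃ p ∈ K ∩ (Submodule.span ℝ {X} : Set E), p ≠ X :=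
    ⟨0, ⟨interior_subset hK0, Submodule.zero_mem _⟩, hX0.symm⟩
  obtain ⟨u0, hu0X, -, hu0d⟩ := rogers_exists_u X X d (by rw [Set.pair_eq_singleton]; exact hd)
  obtain ⟨lam, hl, heq0⟩ := hsec' u0 hu0X hu0d
  have hall : ∀ u : E, ⟪u, X⟫ = 0 → ⟪u, d⟫ ≠ 0 →
      {p | ⟪u, p⟫ = 0} ∩ G =
        (fun p => lam • p + (1 - lam) • X) '' ({p | ⟪u, p⟫ = 0} ∩ K) := by
    intro u hu hud
    obtain ⟨lam', hl', heq'⟩ := hsec' u hu hud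
    have L0 := hline u0 hu0X lam hl heq0
    have L1 := hline u hu lam' hl' heq'
    have : lam' = lam := le_antisymm
      (rogers_ratio_le _ _ hScomp X lam' lam hl' hl hSne L1 L0)
      (rogers_ratio_le _ _ hScomp X lam lam' hl hl' hSne L0 L1)
    rw [← this]; exact heq'
  set W := Submodule.span ℝ ({X, d} : Set E) with hWdef
  have hpW : ∀ p : E, p ∉ W → ∃ u : E, ⟪u, X⟫ = 0 ∧ ⟪u, p⟫ = 0 ∧ ⟪u, d⟫ ≠ 0 := by
    intro p hp
    apply rogers_exists_u
    intro hdm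
    obtain ⟨a, b, hab⟩ := Submodule.mem_span_pair.1 hdm
    by_cases hb : b = 0
    · apply hd
      rw [Submodule.mem_span_singleton]
      exact ⟨a, by rw [← hab, hb]; simp⟩
    · apply hp
      rw [hWdef, Submodule.mem_span_pair]
      refine ⟨-(b⁻¹ * a), b⁻¹, ?_⟩
      rw [← hab, smul_add, smul_smul, smul_smul, inv_mul_cancel₀ hb]
      module
  have hcont : Continuous (fun p : E => lam • p + (1 - lam) • X) := by fun_prop
  refine ⟨lam, hl, (1 - lam) • X, Subset.antisymm ?_ ?_⟩
  · refine (rogers_dense G hGc ⟨0, hG0⟩ W (hsp X d)).trans ?_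
    refine closure_minimal ?_ (hKk.image hcont).isClosed
    rintro p ⟨hpG, hp⟩
    obtain ⟨u, h1, h2, h3⟩ := hpW p hp
    have : p ∈ {p | ⟪u, p⟫ = 0} ∩ G := ⟨h2, hpG⟩
    rw [hall u h1 h3] at this
    obtain ⟨q, ⟨-, hq⟩, hqp⟩ := this
    exact ⟨q, hq, hqp⟩
  · have : K ⊆ (fun p : E => lam • p + (1 - lam) • X) ⁻¹' G := by
      refine (rogers_dense K hKc ⟨0, hK0⟩ W (hsp X d)).trans ?_
      refine closure_minimal ?_ (hGk.isClosed.preimage hcont)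
      rintro p ⟨hpK, hp⟩
      obtain ⟨u, h1, h2, h3⟩ := hpW p hp
      have : lam • p + (1 - lam) • X ∈ {p | ⟪u, p⟫ = 0} ∩ G := by
        rw [hall u h1 h3]; exact ⟨p, ⟨h2, hpK⟩, rfl⟩
      exact this.2
    exact image_subset_iff.2 this

lemma rogers_zero [FiniteDimensional ℝ E] (hn : 3 ≤ Module.finrank ℝ E) (K G : Set E)
    (hKk : IsCompact K) (hGk : IsCompact G)
    (hKc : Convex ℝ K) (hGc : Convex ℝ G) (hK0 : (0 : E) ∈ interior K)
    (hG0 : (0 : E) ∈ interior G) (hsec : RogersSec K G) :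
    ∃ lam : ℝ, 0 < lam ∧ ∃ t : E, G = (fun p => lam • p + t) '' K := by
  have hKn : K ∈ nhds (0 : E) := mem_interior_iff_mem_nhds.1 hK0
  have hgc : Continuous (gauge K) := continuous_gauge hKc hKn
  have habs : Absorbent ℝ K := absorbent_nhds_zero hKn
  have hbdd : IsVonNBounded ℝ K := (NormedSpace.isVonNBounded_iff ℝ).2 hKk.isBounded
  obtain ⟨X0, hX0G, hX0max⟩ := hGk.exists_isMaxOn ⟨0, interior_subset hG0⟩ hgc.continuousOn
  set N := gauge K X0 with hN
  have hNpos : 0 < N := by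
    have : Nontrivial E := Module.nontrivial_of_finrank_pos (R := ℝ) (by omega)
    obtain ⟨y, hy⟩ := exists_ne (0 : E)
    have hGn : G ∈ nhds (0 : E) := mem_interior_iff_mem_nhds.1 hG0
    have ht : Filter.Tendsto (fun s : ℝ => s • y) (nhdsWithin 0 (Ioi 0)) (nhds 0) := by
      have : Filter.Tendsto (fun s : ℝ => s • y) (nhds 0) (nhds ((0 : ℝ) • y)) :=
        (continuous_id.smul continuous_const).tendsto 0
      rw [zero_smul] at this
      exact this.mono_left nhdsWithin_le_nhds
    obtain ⟨s, hs, hs0⟩ := ((ht.eventually hGn).and self_mem_nhdsWithin).exists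
    have h1 : gauge K (s • y) ≤ N := hX0max hs
    have h2 : 0 < gauge K (s • y) :=
      (gauge_pos habs hbdd).2 (smul_ne_zero (ne_of_gt hs0) hy)
    linarith
  obtain ⟨X, ⟨hXG, hXN⟩, hXmax⟩ :=
    (hGk.inter_right (isClosed_eq hgc (continuous_const (y := N)))).exists_isMaxOn
      ⟨X0, hX0G, rfl⟩ (continuous_norm.continuousOn)
  have hXN' : gauge K X = N := hXN
  -- supporting hyperplane
  have hg1 : gauge K (N⁻¹ • X) = 1 := by
    rw [gauge_smul_of_nonneg (inv_nonneg.2 hNpos.le), hXN', smul_eq_mul,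
      inv_mul_cancel₀ hNpos.ne']
  obtain ⟨f, hf⟩ := geometric_hahn_banach_open_point (s := interior K) (x := N⁻¹ • X)
    hKc.interior isOpen_interior (by
      rw [← gauge_lt_one_iff_mem_interior hKc hKn, hg1]; exact lt_irrefl _)
  have hfK : ∀ p ∈ K, f p ≤ f (N⁻¹ • X) := by
    have h1 : K ⊆ closure (interior K) := by
      rw [hKc.closure_interior_eq_closure_of_nonempty_interior ⟨0, hK0⟩]; exact subset_closure
    have h2 : closure (interior K) ⊆ {p | f p ≤ f (N⁻¹ • X)} :=
      closure_minimal (fun p hp => (hf p hp).le) (isClosed_le f.continuous continuous_const)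
    exact fun p hp => h2 (h1 hp)
  have hf0 : 0 < f X := by
    have := hf 0 hK0
    rw [map_zero, map_smul, smul_eq_mul] at this
    exact pos_of_mul_pos_right this (inv_pos.2 hNpos).le
  set e : E := (InnerProductSpace.toDual ℝ E).symm f with he
  have hef : ∀ p, ⟪e, p⟫ = f p := fun p => InnerProductSpace.toDual_symm_apply
  have hmem : ∀ p, gauge K p ≤ N → p ∈ N • K := by
    intro p hp
    rw [mem_smul_set_iff_inv_smul_mem₀ hNpos.ne']
    have h1 : gauge K (N⁻¹ • p) ≤ 1 := by
      rw [gauge_smul_of_nonneg (inv_nonneg.2 hNpos.le), smul_eq_mul, inv_mul_le_iff₀ hNpos]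
      linarith
    rw [gauge_le_one_iff_mem_closure hKc hKn, hKk.isClosed.closure_eq] at h1
    exact h1
  obtain ⟨lam, hl, t, ht⟩ := rogers_core hn (N • K) G (hKk.smul N) hGk (hKc.smul N) hGc
    (by
      rw [interior_smul₀ hNpos.ne']
      exact ⟨0, hK0, smul_zero N⟩) hG0 (fun p hp => hmem p (hX0max hp))
    (by
      intro u hu
      obtain ⟨lam, hl, t, ht⟩ := hsec u hu
      refine ⟨lam / N, by positivity, t, ?_⟩
      rw [ht]
      ext p
      constructor
      · rintro ⟨q, ⟨hq1, hq2⟩, rfl⟩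
        refine ⟨N • q, ⟨?_, q, hq2, rfl⟩, ?_⟩
        · have : ⟪u, q⟫ = 0 := hq1
          show ⟪u, N • q⟫ = 0
          rw [inner_smul_right, this, mul_zero]
        · show (lam / N) • N • q + t = lam • q + t
          rw [smul_smul, div_mul_cancel₀ _ hNpos.ne']
      · rintro ⟨q', ⟨hq1, q, hq2, rfl⟩, rfl⟩
        refine ⟨q, ⟨?_, hq2⟩, ?_⟩
        · have : ⟪u, N • q⟫ = 0 := hq1
          rw [inner_smul_right] at this
          exact (mul_eq_zero.1 this).resolve_left hNpos.ne'
        · show lam • q + t = (lam / N) • N • q + t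
          rw [smul_smul, div_mul_cancel₀ _ hNpos.ne'])
    X e hXG (by rw [hef]; exact hf0)
    (by
      rintro p ⟨q, hq, rfl⟩
      have := hfK q hq
      simp only [hef, map_smul, smul_eq_mul] at this ⊢
      rw [← div_eq_inv_mul, le_div_iff₀ hNpos] at this
      linarith)
    (by
      intro p hp hpe
      rw [hef, hef] at hpe
      refine hXmax ⟨hp, ?_⟩
      show gauge K p = N
      refine le_antisymm (hX0max hp) ?_
      by_contra hc
      push Not at hc
      have h1 : gauge K (N⁻¹ • p) < 1 := by
        rw [gauge_smul_of_nonneg (inv_nonneg.2 hNpos.le), smul_eq_mul, inv_mul_lt_iff₀ hNpos]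
        linarith
      rw [gauge_lt_one_iff_mem_interior hKc hKn] at h1
      have := hf _ h1
      rw [map_smul, map_smul, hpe] at this
      exact lt_irrefl _ this)
  refine ⟨lam * N, by positivity, t, ?_⟩
  rw [ht]
  ext p
  constructor
  · rintro ⟨_, ⟨q, hq, rfl⟩, rfl⟩
    exact ⟨q, hq, by simp only [smul_smul]⟩
  · rintro ⟨q, hq, rfl⟩
    exact ⟨N • q, ⟨q, hq, rfl⟩, by simp only [smul_smul]⟩

end RogersHelpers

/-- Rogers' theorem: if all sections of `K` and `G` by hyperplanes through a common
interior point `O` are homothetic, then `K` and `G` are homothetic. -/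
theorem stmt15 {n : ℕ} (hn : 3 ≤ n) (K G : Set (EuclideanSpace ℝ (Fin n)))
    (hK : IsConvexBody K) (hG : IsConvexBody G)
    (O : EuclideanSpace ℝ (Fin n)) (hOK : O ∈ interior K) (hOG : O ∈ interior G)
    (hsec : ∀ u : EuclideanSpace ℝ (Fin n), u ≠ 0 →
      ∃ lam : ℝ, 0 < lam ∧ ∃ t : EuclideanSpace ℝ (Fin n),
        {p | ⟪u, p - O⟫ = 0} ∩ G = (fun p => lam • p + t) '' ({p | ⟪u, p - O⟫ = 0} ∩ K)) :
    ∃ lam : ℝ, 0 < lam ∧ ∃ t : EuclideanSpace ℝ (Fin n),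
      G = (fun p => lam • p + t) '' K := by
  have hint : ∀ S : Set (EuclideanSpace ℝ (Fin n)), O ∈ interior S →
      (0 : EuclideanSpace ℝ (Fin n)) ∈ interior ((fun p => p + O) ⁻¹' S) := by
    intro S hS
    have hc : Continuous (fun p : EuclideanSpace ℝ (Fin n) => p + O) := by fun_prop
    exact preimage_interior_subset_interior_preimage hc (by simpa using hS)
  have hcomp : ∀ S : Set (EuclideanSpace ℝ (Fin n)), IsCompact S →
      IsCompact ((fun p => p + O) ⁻¹' S) := fun S hS =>
    (Homeomorph.addRight O).isCompact_preimage.2 hS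
  have hconv : ∀ S : Set (EuclideanSpace ℝ (Fin n)), Convex ℝ S →
      Convex ℝ ((fun p => p + O) ⁻¹' S) := fun S hS => hS.translate_preimage_left O
  obtain ⟨lam, hl, t, ht⟩ := rogers_zero (E := EuclideanSpace ℝ (Fin n))
    (by simpa using hn) ((fun p => p + O) ⁻¹' K) ((fun p => p + O) ⁻¹' G)
    (hcomp K hK.1) (hcomp G hG.1) (hconv K hK.2.1) (hconv G hG.2.1) (hint K hOK) (hint G hOG)
    (by
      intro u hu
      obtain ⟨lam, hl, t, ht⟩ := hsec u hu
      refine ⟨lam, hl, lam • O + t - O, ?_⟩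
      ext p
      have h1 : p ∈ {p | ⟪u, p⟫ = 0} ∩ (fun p => p + O) ⁻¹' G ↔
          p + O ∈ {p | ⟪u, p - O⟫ = 0} ∩ G := by simp
      rw [h1, ht]
      constructor
      · rintro ⟨q, ⟨hq1, hq2⟩, hq⟩
        refine ⟨q - O, ⟨hq1, by simpa using hq2⟩, ?_⟩
        have hq' : lam • q + t = p + O := hq
        show lam • (q - O) + (lam • O + t - O) = p
        rw [eq_sub_of_add_eq hq'.symm]; module
      · rintro ⟨q, ⟨hq1, hq2⟩, rfl⟩
        refine ⟨q + O, ⟨by simpa using hq1, hq2⟩, ?_⟩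
        show lam • (q + O) + t = lam • q + (lam • O + t - O) + O
        module)
  refine ⟨lam, hl, t + O - lam • O, ?_⟩
  ext p
  have h1 : p ∈ G ↔ p - O ∈ (fun p => p + O) ⁻¹' G := by simp
  rw [h1, ht]
  constructor
  · rintro ⟨q, hq, hqp⟩
    refine ⟨q + O, hq, ?_⟩
    have hq' : lam • q + t = p - O := hqp
    show lam • (q + O) + (t + O - lam • O) = p
    rw [eq_add_of_sub_eq hq'.symm]; module
  · rintro ⟨q, hq, rfl⟩
    refine ⟨q - O, by simpa using hq, ?_⟩
    show lam • (q - O) + t = lam • q + (t + O - lam • O) - O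
    module
end
end
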